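/- arXiv:1705.09195 — 5 statements merged into one kernel-verified Lean document; each statement's English description precedes it below -/
import Mathlib

section
/- Let X ⊆ P² be a k-configuration of type (d₁,…,d_s) with (d₁,…,d_s) ≠ (1). Then there exists an integer m₀ such that for all integers m ≥ m₀, the first difference ΔH_{mX}(m·d_s − 1) of the Hilbert function of the fat point scheme mX equals the number of lines in P² containing exactly d_s points of X. Moreover, if d_s > s one can take m₀ = 2, and if d_s = s one can take m₀ = s + 1. -/
/-- The projective plane over a field `K`, as the projectivization of `K³`. -/
abbrev P2 (K : Type) [Field K] := Projectivization K (Fin 3 → K)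

/-- A line in `P2 K`: a 2-dimensional linear subspace of `K³`. -/
structure ProjLine (K : Type) [Field K] where
  toSubmodule : Submodule K (Fin 3 → K)
  finrank_eq_two : Module.finrank K toSubmodule = 2

/-- The set of points of `P2 K` lying on a line. -/
def ProjLine.points {K : Type} [Field K] (L : ProjLine K) : Set (P2 K) :=
  {p | p.submodule ≤ L.toSubmodule}

/-- The homogeneous prime ideal of a point of `P2 K`: the ideal generated by
the linear forms vanishing at the point. -/
noncomputable def pointIdeal {K : Type} [Field K] (p : P2 K) :
    Ideal (MvPolynomial (Fin 3) K) :=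
  Ideal.span {f | f.IsHomogeneous 1 ∧ MvPolynomial.eval p.rep f = 0}

/-- The defining ideal `I_{mX} = ⋂_{P ∈ X} I_P^m` of the fat point scheme `mX`. -/
noncomputable def fatIdeal {K : Type} [Field K] (X : Set (P2 K)) (m : ℕ) :
    Ideal (MvPolynomial (Fin 3) K) :=
  ⨅ p ∈ X, (pointIdeal p) ^ m

/-- The Hilbert function of `R/I`: `H(t) = dim_K R_t - dim_K I_t`. -/
noncomputable def hilb {K : Type} [Field K] (I : Ideal (MvPolynomial (Fin 3) K)) (t : ℕ) : ℕ :=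
  Module.finrank K ↥(MvPolynomial.homogeneousSubmodule (Fin 3) K t) -
    Module.finrank K ↥(Submodule.restrictScalars K (I : Submodule (MvPolynomial (Fin 3) K) (MvPolynomial (Fin 3) K)) ⊓ MvPolynomial.homogeneousSubmodule (Fin 3) K t)

/-- The Hilbert function extended to `ℤ`, with `H(t) = 0` for `t < 0`. -/
noncomputable def hilbZ {K : Type} [Field K] (I : Ideal (MvPolynomial (Fin 3) K)) (t : ℤ) : ℤ :=
  if t < 0 then 0 else hilb I t.toNat

/-- The first difference `ΔH(t) = H(t) - H(t-1)` of the Hilbert function. -/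
noncomputable def deltaHilb {K : Type} [Field K] (I : Ideal (MvPolynomial (Fin 3) K)) (t : ℤ) : ℤ :=
  hilbZ I t - hilbZ I (t - 1)

/-- `X` is a k-configuration of type `(d 0, …, d (s-1))` defined using the subsets
`Xs 0, …, Xs (s-1)` and the (distinct) lines `Ls 0, …, Ls (s-1)`. -/
structure IsKConfig {K : Type} [Field K] {s : ℕ} (X : Set (P2 K)) (d : Fin s → ℕ)
    (Xs : Fin s → Set (P2 K)) (Ls : Fin s → ProjLine K) : Prop where
  one_le : ∀ i, 1 ≤ d i
  strictMono : StrictMono d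
  lines_distinct : Function.Injective Ls
  union_eq : X = ⋃ i, Xs i
  card_eq : ∀ i, (Xs i).ncard = d i
  subset_line : ∀ i, Xs i ⊆ (Ls i).points
  not_mem : ∀ i j : Fin s, j < i → ∀ p ∈ Xs j, p ∉ (Ls i).points


open MvPolynomial in
noncomputable def linForm {K : Type} [Field K] (w : Fin 3 → K) : MvPolynomial (Fin 3) K :=
  ∑ i, C (w i) * X i

open MvPolynomial in
theorem linForm_hom {K : Type} [Field K] (w : Fin 3 → K) : (linForm w).IsHomogeneous 1 := by
  unfold linForm
  refine IsHomogeneous.sum _ _ _ fun i _ => ?_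
  have := (isHomogeneous_C (Fin 3) (w i)).mul (isHomogeneous_X K i)
  simpa using this

open MvPolynomial in
theorem eval_linForm {K : Type} [Field K] (w v : Fin 3 → K) :
    eval v (linForm w) = w ⬝ᵥ v := by
  simp [linForm, dotProduct]

/-- Deformation to the normal cone at the point spanned by `v` (with `w ⬝ v = 1`). -/
noncomputable def thetaMap {K : Type} [Field K] (w v : Fin 3 → K) :
    MvPolynomial (Fin 3) K →ₐ[K] Polynomial (MvPolynomial (Fin 3) K) :=
  MvPolynomial.aeval (fun i => Polynomial.C (linForm w * MvPolynomial.C (v i)) +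
    Polynomial.X * Polynomial.C (MvPolynomial.X i - linForm w * MvPolynomial.C (v i)))

theorem hom_one_induction {K : Type} [Field K] {P : MvPolynomial (Fin 3) K → Prop}
    (hX : ∀ i, P (MvPolynomial.X i)) (h0 : P 0) (hadd : ∀ f g, P f → P g → P (f + g))
    (hsmul : ∀ (c : K) f, P f → P (c • f)) (f : MvPolynomial (Fin 3) K)
    (hf : f.IsHomogeneous 1) : P f := by
  have : f ∈ MvPolynomial.homogeneousSubmodule (Fin 3) K 1 := hf
  rw [MvPolynomial.homogeneousSubmodule_one_eq_span_X] at this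
  induction this using Submodule.span_induction with
  | mem x h => obtain ⟨i, rfl⟩ := h; exact hX i
  | zero => exact h0
  | add f g hf' hg' h1 h2 =>
    rw [← MvPolynomial.homogeneousSubmodule_one_eq_span_X] at hf' hg'
    exact hadd _ _ (h1 hf') (h2 hg')
  | smul c f hf' h =>
    rw [← MvPolynomial.homogeneousSubmodule_one_eq_span_X] at hf'
    exact hsmul _ _ (h hf')

theorem theta_hom_one {K : Type} [Field K] (w v : Fin 3 → K) (f : MvPolynomial (Fin 3) K)
    (hf : f.IsHomogeneous 1) :
    thetaMap w v f = Polynomial.C (linForm w * MvPolynomial.C (MvPolynomial.eval v f)) +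
      Polynomial.X * Polynomial.C (f - linForm w * MvPolynomial.C (MvPolynomial.eval v f)) := by
  refine hom_one_induction (P := fun f => thetaMap w v f =
      Polynomial.C (linForm w * MvPolynomial.C (MvPolynomial.eval v f)) +
      Polynomial.X * Polynomial.C (f - linForm w * MvPolynomial.C (MvPolynomial.eval v f)))
      ?_ ?_ ?_ ?_ f hf
  · intro i; simp [thetaMap]
  · simp
  · intro f g h1 h2
    simp only [map_add, h1, h2, mul_add, map_sub]; ring
  · intro c f h
    have hc : ∀ g : Polynomial (MvPolynomial (Fin 3) K),
        c • g = Polynomial.C (MvPolynomial.C c) * g := by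
      intro g; rw [Algebra.smul_def]; rfl
    rw [map_smul, h, hc, MvPolynomial.smul_eval, MvPolynomial.smul_eq_C_mul]
    simp only [map_mul, map_sub]
    ring

theorem theta_mem_rees {K : Type} [Field K] (p : P2 K) (w : Fin 3 → K)
    (hw : w ⬝ᵥ p.rep = 1) (f : MvPolynomial (Fin 3) K) :
    thetaMap w p.rep f ∈ reesAlgebra (pointIdeal p) := by
  induction f using MvPolynomial.induction_on with
  | C a =>
    rw [← MvPolynomial.algebraMap_eq, AlgHom.commutes]
    exact Subalgebra.algebraMap_mem _ (MvPolynomial.C a)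
  | add f g h1 h2 => rw [map_add]; exact add_mem h1 h2
  | mul_X f i h =>
    rw [map_mul]
    refine mul_mem h ?_
    simp only [thetaMap, MvPolynomial.aeval_X]
    refine add_mem (Subalgebra.algebraMap_mem _ _) ?_
    rw [mul_comm, Polynomial.C_mul_X_eq_monomial, reesAlgebra.monomial_mem, pow_one]
    refine Ideal.subset_span ⟨?_, ?_⟩
    · refine (MvPolynomial.isHomogeneous_X K i).sub ?_
      simpa using (linForm_hom w).mul (MvPolynomial.isHomogeneous_C (Fin 3) (p.rep i))
    · simp [eval_linForm, hw]

theorem theta_eval_one {K : Type} [Field K] (w v : Fin 3 → K) (f : MvPolynomial (Fin 3) K) :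
    (thetaMap w v f).eval 1 = f := by
  induction f using MvPolynomial.induction_on with
  | C a =>
    rw [← MvPolynomial.algebraMap_eq, AlgHom.commutes]
    exact Polynomial.eval_C (a := MvPolynomial.C a)
  | add f g h1 h2 => simp [h1, h2]
  | mul_X f i h => rw [map_mul, Polynomial.eval_mul, h]; simp [thetaMap]

theorem mem_pow_iff {K : Type} [Field K] (p : P2 K) (w : Fin 3 → K)
    (hw : w ⬝ᵥ p.rep = 1) (f : MvPolynomial (Fin 3) K) (m : ℕ) :
    f ∈ pointIdeal p ^ m ↔ Polynomial.X ^ m ∣ thetaMap w p.rep f := by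
  constructor
  · intro h
    have h1 : (pointIdeal p).map (thetaMap w p.rep).toRingHom ≤ Ideal.span {Polynomial.X} := by
      rw [pointIdeal, Ideal.map_span, Ideal.span_le]
      rintro _ ⟨g, ⟨hg, hg0⟩, rfl⟩
      simp only [SetLike.mem_coe, Ideal.mem_span_singleton]
      change _ ∣ thetaMap w p.rep g
      rw [theta_hom_one _ _ _ hg, hg0]
      simp
    have h2 := Ideal.mem_map_of_mem (thetaMap w p.rep).toRingHom h
    rw [Ideal.map_pow] at h2
    have h3 := Ideal.pow_right_mono h1 m h2
    rwa [Ideal.span_singleton_pow, Ideal.mem_span_singleton] at h3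
  · intro h
    rw [← theta_eval_one w p.rep f, Polynomial.eval_eq_sum, Polynomial.sum]
    refine Ideal.sum_mem _ fun k hk => ?_
    have hmem := (mem_reesAlgebra_iff _ _).1 (theta_mem_rees p w hw f) k
    rw [Polynomial.X_pow_dvd_iff] at h
    by_cases hkm : k < m
    · simp [h k hkm]
    · simpa using Ideal.pow_le_pow_right (not_lt.1 hkm) hmem

theorem exists_dual {K : Type} [Field K] (p : P2 K) : ∃ w : Fin 3 → K, w ⬝ᵥ p.rep = 1 := by
  have h := p.rep_nonzero
  obtain ⟨i, hi⟩ := Function.ne_iff.1 h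
  exact ⟨Pi.single i (p.rep i)⁻¹, by simp at hi; simp [hi]⟩

theorem mul_mem_of_ne {K : Type} [Field K] (p : P2 K) (l g : MvPolynomial (Fin 3) K) (m : ℕ)
    (hl : l.IsHomogeneous 1) (hlp : MvPolynomial.eval p.rep l ≠ 0)
    (h : l * g ∈ pointIdeal p ^ m) : g ∈ pointIdeal p ^ m := by
  obtain ⟨w, hw⟩ := exists_dual p
  rw [mem_pow_iff p w hw] at h ⊢
  rw [map_mul] at h
  refine Polynomial.prime_X.pow_dvd_of_dvd_mul_left m ?_ h
  rw [theta_hom_one _ _ _ hl, Polynomial.X_dvd_iff]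
  simp only [Polynomial.coeff_add, Polynomial.coeff_C_zero, Polynomial.mul_coeff_zero,
    Polynomial.coeff_X_zero, zero_mul, add_zero]
  refine mul_ne_zero ?_ (by simpa using hlp)
  intro h0
  have := eval_linForm w p.rep
  rw [h0, hw] at this
  simp at this

theorem mul_mem_of_eq {K : Type} [Field K] (p : P2 K) (l g : MvPolynomial (Fin 3) K) (m : ℕ)
    (hl : l.IsHomogeneous 1) (hl0 : l ≠ 0) (hlp : MvPolynomial.eval p.rep l = 0)
    (h : l * g ∈ pointIdeal p ^ m) : g ∈ pointIdeal p ^ (m - 1) := by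
  obtain ⟨w, hw⟩ := exists_dual p
  rw [mem_pow_iff p w hw] at h ⊢
  cases m with
  | zero => simp
  | succ m =>
    rw [map_mul, theta_hom_one _ _ _ hl, hlp] at h
    simp only [map_zero, mul_zero, zero_add, sub_zero, pow_succ', mul_assoc] at h
    rw [mul_dvd_mul_iff_left Polynomial.X_ne_zero] at h
    refine Polynomial.prime_X.pow_dvd_of_dvd_mul_left m ?_ h
    rw [Polynomial.X_dvd_iff]
    simpa using hl0


/-- Linear part of an ideal in degree `t`. -/
noncomputable def grPart {K : Type} [Field K] (I : Ideal (MvPolynomial (Fin 3) K)) (t : ℕ) :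
    Submodule K (MvPolynomial (Fin 3) K) :=
  Submodule.restrictScalars K
    (I : Submodule (MvPolynomial (Fin 3) K) (MvPolynomial (Fin 3) K)) ⊓
    MvPolynomial.homogeneousSubmodule (Fin 3) K t

theorem mem_grPart {K : Type} [Field K] (I : Ideal (MvPolynomial (Fin 3) K)) (t : ℕ)
    (f : MvPolynomial (Fin 3) K) : f ∈ grPart I t ↔ f ∈ I ∧ f.IsHomogeneous t := Iff.rfl

instance finite_hom {K : Type} [Field K] (t : ℕ) :
    Module.Finite K (MvPolynomial.homogeneousSubmodule (Fin 3) K t) :=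
  Module.Finite.iff_fg.2 (MvPolynomial.homogeneousSubmodule_fg (Fin 3) K t)

instance finite_grPart {K : Type} [Field K] (I : Ideal (MvPolynomial (Fin 3) K)) (t : ℕ) :
    Module.Finite K (grPart I t) :=
  Submodule.finiteDimensional_of_le (inf_le_right : grPart I t ≤ _)

theorem finrank_hom {K : Type} [Field K] (t : ℕ) :
    Module.finrank K (MvPolynomial.homogeneousSubmodule (Fin 3) K t) = (t + 2).choose 2 := by
  have h : MvPolynomial.homogeneousSubmodule (Fin 3) K t =
      MvPolynomial.restrictSupport K
        (((Finset.univ : Finset (Fin 3)).finsuppAntidiag t : Finset _) : Set (Fin 3 →₀ ℕ)) := by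
    rw [MvPolynomial.homogeneousSubmodule_eq_finsupp_supported, MvPolynomial.restrictSupport]
    congr 1
    ext d
    simp [Finset.mem_finsuppAntidiag, Finsupp.degree_eq_sum]
  rw [h, Module.finrank_eq_nat_card_basis (MvPolynomial.basisRestrictSupport K _)]
  rw [Nat.card_eq_fintype_card]
  simp only [Finset.coe_sort_coe, Fintype.card_coe]
  rw [Finset.card_finsuppAntidiag_nat_eq_choose]
  simp only [Finset.card_univ, Fintype.card_fin]
  rw [show 3 + t - 1 = t + 2 by omega, Nat.choose_symm_add]

/-- The ideal of a fat point scheme with multiplicities. -/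
noncomputable def mIdeal {K : Type} [Field K] (X : Finset (P2 K)) (μ : P2 K → ℕ) :
    Ideal (MvPolynomial (Fin 3) K) :=
  ⨅ p ∈ X, pointIdeal p ^ μ p

theorem mem_mIdeal {K : Type} [Field K] (X : Finset (P2 K)) (μ : P2 K → ℕ)
    (f : MvPolynomial (Fin 3) K) : f ∈ mIdeal X μ ↔ ∀ p ∈ X, f ∈ pointIdeal p ^ μ p := by
  simp [mIdeal, Submodule.mem_iInf]

theorem coeff_span {K : Type} [Field K] (h a b : MvPolynomial (Fin 3) K)
    (G : MvPolynomial (Fin 3) K) (t k : ℕ) (hG : G.IsHomogeneous t) :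
    (MvPolynomial.aeval ![Polynomial.X * Polynomial.C a, Polynomial.X * Polynomial.C b,
      Polynomial.C h] G : Polynomial (MvPolynomial (Fin 3) K)).coeff k ∈
      Submodule.span K (Set.range fun j : Fin (k + 1) => a ^ (j : ℕ) * b ^ (k - j) * h ^ (t - k)) := by
  rw [G.as_sum, map_sum, Polynomial.finsetSum_coeff]
  refine Submodule.sum_mem _ fun d hd => ?_
  have hdeg : d 0 + d 1 + d 2 = t := by
    have := hG (MvPolynomial.mem_support_iff.1 hd)
    rw [← this]
    simp [Finsupp.weight_apply, Finsupp.sum_fintype, Fin.sum_univ_three]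
  rw [MvPolynomial.aeval_monomial]
  simp only [Finsupp.prod_fintype _ _ (fun i => pow_zero _), Fin.prod_univ_three]
  simp only [Matrix.cons_val_zero, Matrix.cons_val_one, Matrix.cons_val]
  have e : (algebraMap K (Polynomial (MvPolynomial (Fin 3) K))) (MvPolynomial.coeff d G) *
      ((Polynomial.X * Polynomial.C a) ^ d 0 * (Polynomial.X * Polynomial.C b) ^ d 1 *
        Polynomial.C h ^ d 2) =
      Polynomial.C ((MvPolynomial.coeff d G) • (a ^ d 0 * b ^ d 1 * h ^ d 2)) *
        Polynomial.X ^ (d 0 + d 1) := by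
    rw [MvPolynomial.smul_eq_C_mul]
    have : (algebraMap K (Polynomial (MvPolynomial (Fin 3) K))) (MvPolynomial.coeff d G) =
      Polynomial.C (MvPolynomial.C (MvPolynomial.coeff d G)) := rfl
    rw [this]
    simp only [map_mul, map_pow]
    ring
  rw [e, Polynomial.coeff_C_mul_X_pow]
  split_ifs with hk
  · refine Submodule.smul_mem _ _ (Submodule.subset_span ⟨⟨d 0, by omega⟩, ?_⟩)
    have h1 : k - d 0 = d 1 := by omega
    have h2 : t - k = d 2 := by omega
    simp [h1, h2]
  · exact zero_mem _

/-- a linear map measuring the leading coefficient at a point -/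
theorem exists_lead {K : Type} [Field K] (p : P2 K) (t k : ℕ) :
    ∃ (S : Submodule K (MvPolynomial (Fin 3) K))
      (φ : MvPolynomial (Fin 3) K →ₗ[K] MvPolynomial (Fin 3) K),
      Module.Finite K S ∧ Module.finrank K S ≤ k + 1 ∧
      (∀ f, f.IsHomogeneous t → φ f ∈ S) ∧
      (∀ f ∈ pointIdeal p ^ k, φ f = 0 → f ∈ pointIdeal p ^ (k + 1)) := by
  have h := p.rep_nonzero
  obtain ⟨i, hi⟩ := Function.ne_iff.1 h
  simp only [Pi.zero_apply] at hi
  set v := p.rep with hv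
  set w : Fin 3 → K := Pi.single i (v i)⁻¹ with hwdef
  have hw : w ⬝ᵥ v = 1 := by simp [hwdef, hi]
  let xi : Fin 3 → MvPolynomial (Fin 3) K :=
    fun j => MvPolynomial.X j - linForm w * MvPolynomial.C (v j)
  have hlin : linForm w = MvPolynomial.C (v i)⁻¹ * MvPolynomial.X i := by
    unfold linForm
    rw [Finset.sum_eq_single i]
    · simp [hwdef]
    · intro j _ hj; simp [hwdef, hj]
    · simp
  have hxi : xi i = 0 := by
    simp only [xi, hlin]
    have : (MvPolynomial.C (v i)⁻¹ * MvPolynomial.X i * MvPolynomial.C (v i) :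
      MvPolynomial (Fin 3) K) = MvPolynomial.C ((v i)⁻¹ * v i) * MvPolynomial.X i := by
      rw [map_mul]; ring
    rw [this, inv_mul_cancel₀ hi]; simp
  let Ψ : MvPolynomial (Fin 3) K →ₐ[K] MvPolynomial (Fin 3) K :=
    MvPolynomial.aeval fun j => MvPolynomial.C (v j) * MvPolynomial.X 2 +
      (if j = i + 1 then MvPolynomial.X 0 else if j = i + 2 then MvPolynomial.X 1 else 0)
  let Φ : MvPolynomial (Fin 3) K →ₐ[K] Polynomial (MvPolynomial (Fin 3) K) :=
    MvPolynomial.aeval ![Polynomial.X * Polynomial.C (xi (i+1)),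
      Polynomial.X * Polynomial.C (xi (i+2)), Polynomial.C (linForm w)]
  have hcomp : thetaMap w v = Φ.comp Ψ := by
    refine MvPolynomial.algHom_ext fun j => ?_
    have h3 : j = i ∨ j = i + 1 ∨ j = i + 2 := by
      clear * -
      revert i j; decide
    have hC : ∀ c : K, (algebraMap K (Polynomial (MvPolynomial (Fin 3) K))) c =
      Polynomial.C (MvPolynomial.C c) := fun c => rfl
    have hj : thetaMap w v (MvPolynomial.X j) =
      Polynomial.C (linForm w * MvPolynomial.C (v j)) + Polynomial.X * Polynomial.C (xi j) := by
      simp [thetaMap, xi]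
    rw [hj]
    have e1 : i ≠ i + 1 := by clear * -; revert i; decide
    have e2 : i ≠ i + 2 := by clear * -; revert i; decide
    have e3 : i + 2 ≠ i + 1 := by clear * -; revert i; decide
    have hΦ : ∀ c, Φ (MvPolynomial.C c * MvPolynomial.X 2) =
        Polynomial.C (linForm w * MvPolynomial.C c) := by
      intro c
      rw [map_mul, MvPolynomial.algHom_C, hC, mul_comm, Polynomial.C_mul]
      simp [Φ]
    rw [AlgHom.comp_apply]
    have hΨ : Ψ (MvPolynomial.X j) = MvPolynomial.C (v j) * MvPolynomial.X 2 +
      (if j = i + 1 then MvPolynomial.X 0 else if j = i + 2 then MvPolynomial.X 1 else 0) := by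
      simp only [Ψ, MvPolynomial.aeval_X]
    rw [hΨ, map_add, hΦ]
    congr 1
    rcases h3 with rfl | rfl | rfl
    · rw [hxi, if_neg e1, if_neg e2]
      simp
    · rw [if_pos rfl]; simp [Φ]
    · rw [if_neg e3, if_pos rfl]; simp [Φ]
  refine ⟨Submodule.span K (Set.range fun j : Fin (k + 1) =>
      xi (i+1) ^ (j : ℕ) * xi (i+2) ^ (k - j) * linForm w ^ (t - k)),
    ((Polynomial.lcoeff (MvPolynomial (Fin 3) K) k).restrictScalars K).comp
      (thetaMap w v).toLinearMap, ?_, ?_, ?_, ?_⟩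
  · exact Module.Finite.span_of_finite K (Set.finite_range _)
  · refine (finrank_range_le_card _).trans (by simp)
  · intro f hf
    simp only [LinearMap.comp_apply, LinearMap.restrictScalars_apply, Polynomial.lcoeff_apply,
      AlgHom.toLinearMap_apply, hcomp, AlgHom.comp_apply]
    apply coeff_span
    have := hf.aeval (fun j => MvPolynomial.C (v j) * MvPolynomial.X (2 : Fin 3) +
      (if j = i + 1 then MvPolynomial.X 0 else if j = i + 2 then MvPolynomial.X 1 else 0)
      : Fin 3 → MvPolynomial (Fin 3) K) (n := 1) ?_
    · simpa [Ψ] using this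
    · intro j
      refine MvPolynomial.IsHomogeneous.add ?_ ?_
      · simpa using (MvPolynomial.isHomogeneous_C (Fin 3) (v j)).mul
          (MvPolynomial.isHomogeneous_X K 2)
      · split_ifs
        · exact MvPolynomial.isHomogeneous_X K 0
        · exact MvPolynomial.isHomogeneous_X K 1
        · exact MvPolynomial.isHomogeneous_zero _ _ _
  · intro f hf h0
    rw [mem_pow_iff p w hw] at hf ⊢
    simp only [LinearMap.comp_apply, LinearMap.restrictScalars_apply, Polynomial.lcoeff_apply,
      AlgHom.toLinearMap_apply] at h0
    rw [Polynomial.X_pow_dvd_iff] at hf ⊢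
    intro d hd
    rcases Nat.lt_succ_iff_lt_or_eq.1 hd with h | rfl
    · exact hf d h
    · exact h0

/-- rank-nullity in the form needed -/
theorem finrank_le_ker {K V W : Type} [Field K] [AddCommGroup V] [Module K V] [AddCommGroup W]
    [Module K W] (A B : Submodule K V) (S : Submodule K W) [Module.Finite K A] [Module.Finite K B]
    [Module.Finite K S] (φ : V →ₗ[K] W) (h1 : ∀ f ∈ A, φ f ∈ S)
    (h2 : ∀ f ∈ A, φ f = 0 → f ∈ B) :
    Module.finrank K A ≤ Module.finrank K B + Module.finrank K S := by
  let ψ : A →ₗ[K] S := (φ.domRestrict A).codRestrict S (fun a => h1 a a.2)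
  have h := LinearMap.finrank_range_add_finrank_ker ψ
  have h3 : Module.finrank K (LinearMap.range ψ) ≤ Module.finrank K S := Submodule.finrank_le _
  let χ : LinearMap.ker ψ →ₗ[K] B :=
    (A.subtype.comp (LinearMap.ker ψ).subtype).codRestrict B (fun a => h2 _ a.1.2 (by
      have := a.2
      rw [LinearMap.mem_ker] at this
      exact congrArg Subtype.val this))
  have h4 : Module.finrank K (LinearMap.ker ψ) ≤ Module.finrank K B := by
    refine LinearMap.finrank_le_finrank_of_injective (f := χ) ?_
    intro x y hxy
    have := congrArg Subtype.val hxy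
    exact Subtype.ext (Subtype.ext this)
  omega

/-- Dimension of the degree `τ - 1` part of the ideal. -/
noncomputable def dimI {K : Type} [Field K] (X : Finset (P2 K)) (μ : P2 K → ℕ) : ℕ → ℕ
  | 0 => 0
  | t + 1 => Module.finrank K (grPart (mIdeal X μ) t)

theorem dimI_congr {K : Type} [Field K] (X : Finset (P2 K)) (μ ν : P2 K → ℕ)
    (h : ∀ p ∈ X, μ p = ν p) (τ : ℕ) : dimI X μ τ = dimI X ν τ := by
  have : mIdeal X μ = mIdeal X ν := by
    ext f; simp only [mem_mIdeal]
    exact forall₂_congr fun p hp => by rw [h p hp]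
  cases τ <;> simp only [dimI]
  rw [this]

theorem dimI_zero {K : Type} [Field K] (X : Finset (P2 K)) (τ : ℕ) :
    dimI X (fun _ => 0) τ = (τ + 1).choose 2 := by
  cases τ with
  | zero => rfl
  | succ t =>
    have : grPart (mIdeal X (fun _ => 0)) t = MvPolynomial.homogeneousSubmodule (Fin 3) K t := by
      ext f; simp [mem_grPart, mem_mIdeal]
    simp only [dimI]
    rw [this, finrank_hom]

theorem dimI_point {K : Type} [Field K] [DecidableEq (P2 K)] (X : Finset (P2 K)) (μ : P2 K → ℕ)
    (p : P2 K) (τ : ℕ) :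
    dimI X μ τ ≤ dimI X (Function.update μ p (μ p + 1)) τ + (μ p + 1) := by
  cases τ with
  | zero => simp [dimI]
  | succ t =>
    simp only [dimI]
    obtain ⟨S, φ, hS, hS2, h1, h2⟩ := exists_lead p t (μ p)
    refine (finrank_le_ker (grPart (mIdeal X μ) t)
      (grPart (mIdeal X (Function.update μ p (μ p + 1))) t) S φ ?_ ?_).trans
      (Nat.add_le_add_left hS2 _)
    · intro f hf; exact h1 f hf.2
    · intro f hf h0
      refine ⟨?_, hf.2⟩
      have hf1 := (mem_mIdeal _ _ _).1 hf.1
      refine (mem_mIdeal _ _ _).2 fun q hq => ?_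
      by_cases hqp : q = p
      · subst hqp; simpa using h2 f (hf1 q hq) h0
      · simpa [hqp] using hf1 q hq

theorem dimI_lower {K : Type} [Field K] (X : Finset (P2 K)) (μ : P2 K → ℕ) (τ : ℕ) :
    (τ + 1).choose 2 ≤ dimI X μ τ + ∑ p ∈ X, (μ p + 1).choose 2 := by
  classical
  induction hn : ∑ p ∈ X, μ p generalizing μ with
  | zero =>
    have h0 : ∀ p ∈ X, μ p = 0 := by simpa using hn
    rw [dimI_congr X μ (fun _ => 0) h0, dimI_zero]
    omega
  | succ n ih =>
    obtain ⟨p, hp, hp0⟩ : ∃ p ∈ X, μ p ≠ 0 := by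
      by_contra hcon
      push Not at hcon
      rw [Finset.sum_eq_zero hcon] at hn
      omega
    set ν := Function.update μ p (μ p - 1) with hν
    have hνμ : Function.update ν p (ν p + 1) = μ := by
      ext q
      by_cases hq : q = p
      · subst hq; simp [hν]; omega
      · simp [hν, hq]
    have hne : ∀ q ∈ X.erase p, ν q = μ q := by
      intro q hq; simp [hν, Finset.ne_of_mem_erase hq]
    have hνp : ν p = μ p - 1 := by simp [hν]
    have s1 := Finset.add_sum_erase X (fun q => μ q) hp
    have s2 := Finset.add_sum_erase X (fun q => ν q) hp
    have s4 : ∑ q ∈ X.erase p, ν q = ∑ q ∈ X.erase p, μ q := Finset.sum_congr rfl hne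
    rw [s4, hνp] at s2
    have s3 : ∑ p ∈ X, ν p = n := by omega
    have c1 := Finset.add_sum_erase X (fun q => (μ q + 1).choose 2) hp
    have c2 := Finset.add_sum_erase X (fun q => (ν q + 1).choose 2) hp
    rw [Finset.sum_congr rfl (fun q hq => by rw [hne q hq] : ∀ q ∈ X.erase p,
      (ν q + 1).choose 2 = (μ q + 1).choose 2)] at c2
    have i1 := ih ν s3
    have i2 := dimI_point X ν p τ
    rw [hνμ] at i2
    have i3 : (μ p + 1).choose 2 = (ν p + 1).choose 2 + (ν p + 1) := by
      obtain ⟨k, hk⟩ := Nat.exists_eq_succ_of_ne_zero hp0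
      rw [hνp, hk]; simp [Nat.choose_succ_succ]; ring
    omega


theorem line_data {K : Type} [Field K] [Infinite K] (X : Finset (P2 K)) (L : ProjLine K) :
    ∃ A B E n α β : Fin 3 → K, α ≠ 0 ∧ n ≠ 0 ∧
      (∀ x, x ∈ L.toSubmodule ↔ n ⬝ᵥ x = 0) ∧
      (∀ x, x = (n ⬝ᵥ x) • E + (α ⬝ᵥ x) • A + (β ⬝ᵥ x) • B) ∧
      (∀ p ∈ X, p ∈ L.points → ∃ u c : K, p.rep = c • (A + u • B)) := by
  classical
  let bL : Module.Basis (Fin 2) K L.toSubmodule :=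
    Module.finBasisOfFinrankEq K L.toSubmodule L.finrank_eq_two
  set b0 : Fin 3 → K := ((bL 0 : L.toSubmodule) : Fin 3 → K) with hb0
  set b1 : Fin 3 → K := ((bL 1 : L.toSubmodule) : Fin 3 → K) with hb1
  have hlin : ∀ r s : K, r • b0 + s • b1 = 0 → r = 0 ∧ s = 0 := by
    have h := bL.linearIndependent
    have h2 : LinearIndependent K ![bL 0, bL 1] := by
      convert h using 1
      ext i; fin_cases i <;> rfl
    rw [LinearIndependent.pair_iff] at h2
    intro r s hrs
    refine h2 r s (Subtype.ext ?_)
    simpa [hb0, hb1] using hrs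
  have hnz : ∀ c : K, b0 + c • b1 ≠ 0 := by
    intro c hc
    have := hlin 1 c (by simpa using hc)
    exact one_ne_zero this.1
  have hinj : Function.Injective fun c : K => Projectivization.mk K (b0 + c • b1) (hnz c) := by
    intro c c' hcc
    simp only [Projectivization.mk_eq_mk_iff'] at hcc
    obtain ⟨a, ha⟩ := hcc
    have := hlin (a - 1) (a * c' - c) (by
      rw [sub_smul, sub_smul, one_smul, mul_smul]
      rw [smul_add] at ha
      have e : a • b0 - b0 + (a • c' • b1 - c • b1) = (a • b0 + a • c' • b1) - (b0 + c • b1) := by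
        abel
      rw [e, ha, sub_self])
    have h1 : a = 1 := sub_eq_zero.1 this.1
    have h2 := sub_eq_zero.1 this.2
    rw [h1, one_mul] at h2
    exact h2.symm
  obtain ⟨c, hc⟩ := Infinite.exists_notMem_finset (X.preimage _ hinj.injOn)
  rw [Finset.mem_preimage] at hc
  set B := b0 + c • b1 with hB
  set A := b1 with hA
  have hlinAB : ∀ r s : K, r • A + s • B = 0 → r = 0 ∧ s = 0 := by
    intro r s h
    have := hlin s (r + s * c) (by
      rw [← h, hB, add_smul, smul_add, mul_smul]; abel)
    obtain ⟨h1, h2⟩ := this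
    subst h1
    simpa using h2
  have hAm : A ∈ L.toSubmodule := (bL 1).2
  have hBm : B ∈ L.toSubmodule := add_mem (bL 0).2 (Submodule.smul_mem _ _ (bL 1).2)
  have hspan : ∀ x ∈ L.toSubmodule, ∃ r s : K, x = r • A + s • B := by
    intro x hx
    have h := bL.sum_repr ⟨x, hx⟩
    rw [Fin.sum_univ_two] at h
    have h2 := congrArg Subtype.val h
    simp only [Submodule.coe_add, Submodule.coe_smul] at h2
    set r := bL.repr ⟨x, hx⟩ 0
    set s := bL.repr ⟨x, hx⟩ 1
    refine ⟨s - r * c, r, ?_⟩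
    rw [← h2, hB, sub_smul, smul_add, mul_smul]; abel
  obtain ⟨E, hE⟩ : ∃ E, E ∉ L.toSubmodule := by
    by_contra hcon
    push Not at hcon
    have : L.toSubmodule = ⊤ := by ext; simp [hcon]
    have h2 := L.finrank_eq_two
    rw [this, finrank_top] at h2
    simp at h2
  have hli : LinearIndependent K ![E, A, B] := by
    rw [Fintype.linearIndependent_iff]
    intro g hg
    simp only [Fin.sum_univ_three, Matrix.cons_val_zero, Matrix.cons_val_one,
      Matrix.cons_val] at hg
    have h0 : g 0 = 0 := by
      by_contra h0
      apply hE
      have : E = (g 0)⁻¹ • (-(g 1 • A + g 2 • B)) := by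
        rw [eq_inv_smul_iff₀ h0, eq_neg_iff_add_eq_zero, ← hg]; abel
      rw [this]
      exact Submodule.smul_mem _ _ (neg_mem (add_mem (Submodule.smul_mem _ _ hAm)
        (Submodule.smul_mem _ _ hBm)))
    rw [h0, zero_smul, zero_add] at hg
    have := hlinAB _ _ hg
    intro i
    fin_cases i
    · exact h0
    · exact this.1
    · exact this.2
  let b : Module.Basis (Fin 3) K (Fin 3 → K) :=
    basisOfLinearIndependentOfCardEqFinrank hli (by simp)
  have hb : ⇑b = ![E, A, B] := coe_basisOfLinearIndependentOfCardEqFinrank _ _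
  let cv : Fin 3 → (Fin 3 → K) := fun i j => b.coord i (Pi.single j 1)
  have hcv : ∀ i x, cv i ⬝ᵥ x = b.repr x i := by
    intro i x
    have : b.coord i x = b.coord i (∑ j, x j • Pi.single j (1 : K)) := by
      congr 1
      ext k; simp [Finset.sum_apply, Pi.single_apply]
    rw [← Module.Basis.coord_apply, this, map_sum]
    simp [dotProduct, cv, mul_comm]
  have hbE : b 0 = E := by rw [hb]; rfl
  have hbA : b 1 = A := by rw [hb]; rfl
  have hbB : b 2 = B := by rw [hb]; rfl
  have hdec : ∀ x, x = (cv 0 ⬝ᵥ x) • E + (cv 1 ⬝ᵥ x) • A + (cv 2 ⬝ᵥ x) • B := by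
    intro x
    have h := b.sum_repr x
    rw [Fin.sum_univ_three, hbE, hbA, hbB] at h
    simp only [hcv]
    exact h.symm
  refine ⟨A, B, E, cv 0, cv 1, cv 2, ?_, ?_, ?_, hdec, ?_⟩
  · intro h
    have := hcv 1 (b 1)
    rw [h] at this; simp at this
  · intro h
    have := hcv 0 (b 0)
    rw [h] at this; simp at this
  · intro x
    constructor
    · intro hx
      obtain ⟨r, s, rfl⟩ := hspan x hx
      rw [hcv, ← hbA, ← hbB]
      simp [Finsupp.single_apply]
    · intro hx
      rw [hdec x, hx, zero_smul, zero_add]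
      exact add_mem (Submodule.smul_mem _ _ hAm) (Submodule.smul_mem _ _ hBm)
  · intro p hp hpL
    have hrep : p.rep ∈ L.toSubmodule := by
      apply hpL
      rw [Projectivization.submodule_eq]
      exact Submodule.mem_span_singleton_self _
    obtain ⟨r, s, hrs⟩ := hspan _ hrep
    have hr : r ≠ 0 := by
      rintro rfl
      rw [zero_smul, zero_add] at hrs
      apply hc
      have : Projectivization.mk K (b0 + c • b1) (hnz c) = p := by
        rw [← p.mk_rep, Projectivization.mk_eq_mk_iff']
        have hs : s ≠ 0 := by
          rintro rfl
          exact p.rep_nonzero (by rw [hrs, zero_smul])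
        exact ⟨s⁻¹, by rw [hrs, inv_smul_smul₀ hs]⟩
      rw [this]; exact hp
    exact ⟨s / r, r, by rw [hrs, smul_add r, smul_smul r, mul_div_cancel₀ _ hr]⟩

theorem mem_points_iff {K : Type} [Field K] (L : ProjLine K) (p : P2 K) :
    p ∈ L.points ↔ p.rep ∈ L.toSubmodule := by
  rw [ProjLine.points, Set.mem_ofPred_eq, Projectivization.submodule_eq,
    Submodule.span_singleton_le_iff_mem]

/-- restriction to a parametrized line -/
noncomputable def rhoMap {K : Type} [Field K] (A B : Fin 3 → K) :
    MvPolynomial (Fin 3) K →ₐ[K] Polynomial K :=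
  MvPolynomial.aeval (fun i => Polynomial.C (A i) + Polynomial.X * Polynomial.C (B i))

theorem rho_eval {K : Type} [Field K] (A B : Fin 3 → K) (u : K) (f : MvPolynomial (Fin 3) K) :
    (rhoMap A B f).eval u = MvPolynomial.eval (A + u • B) f := by
  induction f using MvPolynomial.induction_on with
  | C a => rw [MvPolynomial.algHom_C]; simp
  | add f g h1 h2 => simp [h1, h2]
  | mul_X f i h =>
    rw [map_mul, Polynomial.eval_mul, h, map_mul]
    congr 1
    simp [rhoMap]
    ring

theorem eval_smul_hom {K : Type} [Field K] (f : MvPolynomial (Fin 3) K) (t : ℕ)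
    (hf : f.IsHomogeneous t) (c : K) (v : Fin 3 → K) :
    MvPolynomial.eval (c • v) f = c ^ t * MvPolynomial.eval v f := by
  rw [MvPolynomial.eval_eq, MvPolynomial.eval_eq, Finset.mul_sum]
  refine Finset.sum_congr rfl fun d hd => ?_
  have hdeg : d 0 + d 1 + d 2 = t := by
    have := hf (MvPolynomial.mem_support_iff.1 hd)
    rw [← this]
    simp [Finsupp.weight_apply, Finsupp.sum_fintype, Fin.sum_univ_three]
  have e : ∀ y : Fin 3 → K, ∏ i ∈ d.support, y i ^ d i = y 0 ^ d 0 * y 1 ^ d 1 * y 2 ^ d 2 := by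
    intro y
    have := Finsupp.prod_fintype d (fun i k => y i ^ k) (fun i => pow_zero _)
    rw [Fin.prod_univ_three] at this
    exact this
  rw [e, e, ← hdeg]
  simp only [Pi.smul_apply, smul_eq_mul, mul_pow, pow_add]
  ring

theorem rho_dvd {K : Type} [Field K] (A B : Fin 3 → K) (p : P2 K) (u c : K)
    (hp : p.rep = c • (A + u • B)) (f : MvPolynomial (Fin 3) K) (k : ℕ)
    (hf : f ∈ pointIdeal p ^ k) : (Polynomial.X - Polynomial.C u) ^ k ∣ rhoMap A B f := by
  have hc : c ≠ 0 := by
    rintro rfl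
    exact p.rep_nonzero (by rw [hp, zero_smul])
  have h1 : (pointIdeal p).map (rhoMap A B).toRingHom ≤
      Ideal.span {Polynomial.X - Polynomial.C u} := by
    rw [pointIdeal, Ideal.map_span, Ideal.span_le]
    rintro _ ⟨g, ⟨hg, hg0⟩, rfl⟩
    simp only [SetLike.mem_coe, Ideal.mem_span_singleton]
    change _ ∣ rhoMap A B g
    rw [Polynomial.dvd_iff_isRoot, Polynomial.IsRoot.def, rho_eval]
    rw [hp, eval_smul_hom g 1 hg] at hg0
    simpa [hc] using hg0
  have h2 := Ideal.mem_map_of_mem (rhoMap A B).toRingHom hf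
  rw [Ideal.map_pow] at h2
  have h3 := Ideal.pow_right_mono h1 k h2
  rwa [Ideal.span_singleton_pow, Ideal.mem_span_singleton] at h3

theorem rho_natDegree {K : Type} [Field K] (A B : Fin 3 → K) (f : MvPolynomial (Fin 3) K) (t : ℕ)
    (hf : f.IsHomogeneous t) : (rhoMap A B f).natDegree ≤ t := by
  have := MvPolynomial.aeval_natDegree_le f hf.totalDegree_le
    (fun i => Polynomial.C (A i) + Polynomial.X * Polynomial.C (B i)) (n := 1) (fun i => by
      compute_degree)
  simpa [rhoMap] using this

theorem linForm_ne_zero {K : Type} [Field K] (n : Fin 3 → K) (hn : n ≠ 0) : linForm n ≠ 0 := by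
  intro h
  apply hn
  ext i
  have := eval_linForm n (Pi.single i 1)
  rw [h] at this
  simpa using this.symm

theorem rho_ker {K : Type} [Field K] [Infinite K] (A B E n α β : Fin 3 → K) (hα : α ≠ 0)
    (hdec : ∀ x, x = (n ⬝ᵥ x) • E + (α ⬝ᵥ x) • A + (β ⬝ᵥ x) • B)
    (f : MvPolynomial (Fin 3) K) (t : ℕ) (hf : f.IsHomogeneous t) (h0 : rhoMap A B f = 0) :
    linForm n ∣ f := by
  let π : MvPolynomial (Fin 3) K →ₐ[K] MvPolynomial (Fin 3) K :=
    MvPolynomial.aeval fun i => MvPolynomial.X i - linForm n * MvPolynomial.C (E i)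
  have h1 : ∀ g, linForm n ∣ g - π g := by
    intro g
    induction g using MvPolynomial.induction_on with
    | C a => rw [MvPolynomial.algHom_C]; simp
    | add f g h1 h2 => rw [map_add, add_sub_add_comm]; exact dvd_add h1 h2
    | mul_X f i h =>
      rw [map_mul]
      have : π (MvPolynomial.X i) = MvPolynomial.X i - linForm n * MvPolynomial.C (E i) := by
        simp [π]
      rw [this]
      have e : f * MvPolynomial.X i - π f * (MvPolynomial.X i - linForm n * MvPolynomial.C (E i)) =
        (f - π f) * MvPolynomial.X i + linForm n * (π f * MvPolynomial.C (E i)) := by ring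
      rw [e]
      exact dvd_add (h.mul_right _) (Dvd.intro _ rfl)
  have h2 : ∀ g y, MvPolynomial.eval y (π g) = MvPolynomial.eval (y - (n ⬝ᵥ y) • E) g := by
    intro g y
    induction g using MvPolynomial.induction_on with
    | C a => rw [MvPolynomial.algHom_C]; simp
    | add f g h1 h2 => simp [h1, h2]
    | mul_X f i h => rw [map_mul, map_mul, h, map_mul]; simp [π, eval_linForm]
  have h3 : linForm α * π f = 0 := by
    apply MvPolynomial.funext
    intro y
    rw [map_mul, eval_linForm, h2, map_zero]
    by_cases ha : α ⬝ᵥ y = 0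
    · rw [ha, zero_mul]
    · have e : y - (n ⬝ᵥ y) • E = (α ⬝ᵥ y) • (A + ((β ⬝ᵥ y) / (α ⬝ᵥ y)) • B) := by
        rw [smul_add, smul_smul, mul_div_cancel₀ _ ha]
        nth_rw 1 [hdec y]; abel
      rw [e, eval_smul_hom f t hf, ← rho_eval, h0]
      simp
  have h4 : π f = 0 := (mul_eq_zero.1 h3).resolve_left (linForm_ne_zero α hα)
  simpa [h4] using h1 f

theorem hom_factor {K : Type} [Field K] (l f : MvPolynomial (Fin 3) K) (t : ℕ)
    (hl : l.IsHomogeneous 1) (hf : f.IsHomogeneous t) (h : l ∣ f) :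
    (t = 0 → f = 0) ∧ (∀ t', t = t' + 1 → ∃ g : MvPolynomial (Fin 3) K,
      g.IsHomogeneous t' ∧ f = l * g) := by
  obtain ⟨g, rfl⟩ := h
  let inst : GradedRing (MvPolynomial.homogeneousSubmodule (Fin 3) K) :=
    MvPolynomial.gradedAlgebra
  have hf' : l * g ∈ (MvPolynomial.homogeneousSubmodule (Fin 3) K) t := hf
  have hl' : l ∈ (MvPolynomial.homogeneousSubmodule (Fin 3) K) 1 := hl
  have e := DirectSum.decompose_of_mem_same (MvPolynomial.homogeneousSubmodule (Fin 3) K) hf'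
  constructor
  · rintro rfl
    rw [DirectSum.coe_decompose_mul_of_left_mem_of_not_le (MvPolynomial.homogeneousSubmodule (Fin 3) K) hl' (by omega)] at e
    exact e.symm
  · rintro t' rfl
    rw [DirectSum.coe_decompose_mul_of_left_mem_of_le (MvPolynomial.homogeneousSubmodule (Fin 3) K) hl' (by omega)] at e
    exact ⟨_, (DirectSum.decompose (MvPolynomial.homogeneousSubmodule (Fin 3) K) g (t' + 1 - 1)).2, e.symm⟩


open Classical in
/-- lower the multiplicities along a line by one -/
noncomputable def subL {K : Type} [Field K] (μ : P2 K → ℕ) (L : ProjLine K) : P2 K → ℕ :=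
  fun p => μ p - if p ∈ L.points then 1 else 0

theorem eq_of_rep_smul {K : Type} [Field K] (p q : P2 K) (v : Fin 3 → K) (c c' : K)
    (hp : p.rep = c • v) (hq : q.rep = c' • v) : p = q := by
  have hc' : c' ≠ 0 := by
    rintro rfl
    exact q.rep_nonzero (by rw [hq, zero_smul])
  rw [← p.mk_rep, ← q.mk_rep, Projectivization.mk_eq_mk_iff']
  exact ⟨c / c', by rw [hp, hq, smul_smul, div_mul_cancel₀ _ hc']⟩

open Classical in
theorem dimI_upper {K : Type} [Field K] [Infinite K] (X : Finset (P2 K)) (μ : P2 K → ℕ)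
    (L : ProjLine K) (t : ℕ) :
    dimI X μ (t + 1) ≤ dimI X (subL μ L) t + (t + 1 - ∑ p ∈ X with p ∈ L.points, μ p) := by
  obtain ⟨A, B, E, n, α, β, hα, hn, hmem, hdec, hpt⟩ := line_data X L
  have hpt' : ∀ p : P2 K, ∃ u c : K, p ∈ X → p ∈ L.points → p.rep = c • (A + u • B) := by
    intro p
    by_cases h : p ∈ X ∧ p ∈ L.points
    · obtain ⟨u, c, h⟩ := hpt p h.1 h.2
      exact ⟨u, c, fun _ _ => h⟩
    · exact ⟨0, 0, fun h1 h2 => absurd ⟨h1, h2⟩ h⟩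
  choose u c huc using hpt'
  set Y := X.filter (· ∈ L.points) with hY
  have hYm : ∀ p ∈ Y, p ∈ X ∧ p ∈ L.points := fun p hp => Finset.mem_filter.1 hp
  set Q : Polynomial K := ∏ p ∈ Y, (Polynomial.X - Polynomial.C (u p)) ^ μ p with hQ
  have hQm : Q.Monic := Polynomial.monic_prod_of_monic _ _
    fun p _ => (Polynomial.monic_X_sub_C _).pow _
  have hQd : Q.natDegree = ∑ p ∈ Y, μ p := by
    rw [hQ, Polynomial.natDegree_prod_of_monic _ _ fun p _ => (Polynomial.monic_X_sub_C _).pow _]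
    simp
  have hQdvd : ∀ f ∈ mIdeal X μ, Q ∣ rhoMap A B f := by
    intro f hf
    refine Finset.prod_dvd_of_coprime ?_ ?_
    · intro p hp q hq hpq
      refine IsCoprime.pow (Polynomial.isCoprime_X_sub_C_of_isUnit_sub ?_)
      rw [isUnit_iff_ne_zero, sub_ne_zero]
      intro he
      have h1 := huc p (hYm p hp).1 (hYm p hp).2
      have h2 := huc q (hYm q hq).1 (hYm q hq).2
      rw [he] at h1
      exact hpq (eq_of_rep_smul p q _ _ _ h1 h2)
    · intro p hp
      exact rho_dvd A B p _ _ (huc p (hYm p hp).1 (hYm p hp).2) f _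
        ((mem_mIdeal _ _ _).1 hf p (hYm p hp).1)
  set e := ∑ p ∈ Y, μ p with he
  let S : Submodule K (Polynomial K) :=
    (Polynomial.degreeLT K (t + 1 - e)).map (LinearMap.mulLeft K Q)
  have hSf : Module.Finite K (Polynomial.degreeLT K (t + 1 - e)) :=
    Module.Finite.equiv (Polynomial.degreeLTEquiv K (t + 1 - e)).symm
  have hS : Module.finrank K S ≤ t + 1 - e := by
    refine (Submodule.finrank_map_le _ _).trans ?_
    rw [(Polynomial.degreeLTEquiv K (t + 1 - e)).finrank_eq]
    simp
  have h1 : ∀ f ∈ grPart (mIdeal X μ) t, (rhoMap A B).toLinearMap f ∈ S := by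
    intro f hf
    obtain ⟨g, hg⟩ := hQdvd f hf.1
    refine ⟨g, ?_, hg.symm⟩
    by_cases hg0 : g = 0
    · rw [hg0]; exact zero_mem _
    have := rho_natDegree A B f t hf.2
    rw [hg, hQm.natDegree_mul' hg0, hQd] at this
    rw [SetLike.mem_coe, Polynomial.mem_degreeLT, Polynomial.degree_eq_natDegree hg0]
    exact_mod_cast (by omega : g.natDegree < t + 1 - e)
  have hev : ∀ p : P2 K, MvPolynomial.eval p.rep (linForm n) = 0 ↔ p ∈ L.points := by
    intro p
    rw [eval_linForm, mem_points_iff, hmem]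
  have hB : ∀ g, linForm n * g ∈ mIdeal X μ → g ∈ mIdeal X (subL μ L) := by
    intro g hg
    rw [mem_mIdeal] at hg ⊢
    intro p hp
    unfold subL
    split_ifs with hpL
    · exact mul_mem_of_eq p _ g _ (linForm_hom n) (linForm_ne_zero n hn) ((hev p).2 hpL) (hg p hp)
    · exact mul_mem_of_ne p _ g _ (linForm_hom n) (fun h => hpL ((hev p).1 h)) (hg p hp)
  simp only [dimI]
  cases t with
  | zero =>
    have := finrank_le_ker (grPart (mIdeal X μ) 0) ⊥ S (rhoMap A B).toLinearMap h1 (by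
      intro f hf h0
      have hd := rho_ker A B E n α β hα hdec f 0 hf.2 h0
      rw [Submodule.mem_bot]
      exact (hom_factor _ _ 0 (linForm_hom n) hf.2 hd).1 rfl)
    rw [finrank_bot] at this
    simp only [dimI]
    omega
  | succ t =>
    have := finrank_le_ker (grPart (mIdeal X μ) (t + 1))
      ((grPart (mIdeal X (subL μ L)) t).map (LinearMap.mulLeft K (linForm n)))
      S (rhoMap A B).toLinearMap h1 (by
      intro f hf h0
      have hd := rho_ker A B E n α β hα hdec f _ hf.2 h0
      obtain ⟨g, hg, rfl⟩ := (hom_factor _ _ _ (linForm_hom n) hf.2 hd).2 t rfl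
      exact ⟨g, ⟨hB g hf.1, hg⟩, rfl⟩)
    have h3 := Submodule.finrank_map_le (LinearMap.mulLeft K (linForm n))
      (grPart (mIdeal X (subL μ L)) t)
    simp only [dimI]
    omega

open Classical in
theorem dimI_mul {K : Type} [Field K] [Infinite K] (X : Finset (P2 K)) (μ : P2 K → ℕ)
    (L : ProjLine K) (t : ℕ) : dimI X (subL μ L) t ≤ dimI X μ (t + 1) := by
  obtain ⟨A, B, E, n, α, β, hα, hn, hmem, hdec, hpt⟩ := line_data X L
  cases t with
  | zero => simp [dimI]
  | succ t =>
    have hinj : Function.Injective (LinearMap.mulLeft K (linForm n)) :=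
      mul_right_injective₀ (linForm_ne_zero n hn)
    have e := (Submodule.equivMapOfInjective _ hinj (grPart (mIdeal X (subL μ L)) t)).finrank_eq
    simp only [dimI]
    rw [e]
    refine Submodule.finrank_mono ?_
    rintro _ ⟨g, hg, rfl⟩
    refine ⟨?_, ?_⟩
    · have hg1 := (mem_mIdeal _ _ _).1 hg.1
      refine (mem_mIdeal _ _ _).2 fun p hp => ?_
      have h := hg1 p hp
      unfold subL at h
      split_ifs at h with hpL
      · have hl : linForm n ∈ pointIdeal p := by
          refine Ideal.subset_span ⟨linForm_hom n, ?_⟩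
          rw [eval_linForm, ← hmem, ← mem_points_iff]; exact hpL
        have h2 := Ideal.mul_mem_mul hl h
        rw [← pow_succ'] at h2
        exact Ideal.pow_le_pow_right (by omega) h2
      · exact Ideal.mul_mem_left _ _ h
    · have := (linForm_hom n).mul hg.2
      rwa [add_comm] at this


open Classical in
/-- indicator of a line -/
noncomputable def ind {K : Type} [Field K] (L : ProjLine K) (p : P2 K) : ℤ :=
  if p ∈ L.points then 1 else 0

theorem ind_nonneg {K : Type} [Field K] (L : ProjLine K) (p : P2 K) : 0 ≤ ind L p := by
  unfold ind; split_ifs <;> simp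

theorem ind_of_mem {K : Type} [Field K] {L : ProjLine K} {p : P2 K} (h : p ∈ L.points) :
    ind L p = 1 := by simp [ind, h]

theorem ind_of_notMem {K : Type} [Field K] {L : ProjLine K} {p : P2 K} (h : p ∉ L.points) :
    ind L p = 0 := by simp [ind, h]

/-- regularity: all smaller schemes impose independent conditions in degree `≥ τ - 1`. -/
def Reg {K : Type} [Field K] (X : Finset (P2 K)) (β : P2 K → ℤ) (τ : ℤ) : Prop :=
  ∀ μ : P2 K → ℕ, (∀ p ∈ X, (μ p : ℤ) ≤ max (β p) 0) → ∀ t : ℕ, τ ≤ t →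
    dimI X μ t + ∑ p ∈ X, (μ p + 1).choose 2 = (t + 1).choose 2

theorem Reg.mono {K : Type} [Field K] {X : Finset (P2 K)} {β γ : P2 K → ℤ} {τ σ : ℤ}
    (h : Reg X β τ) (h1 : ∀ p ∈ X, γ p ≤ β p) (h2 : τ ≤ σ) : Reg X γ σ := by
  intro μ hμ t ht
  exact h μ (fun p hp => (hμ p hp).trans (max_le_max_right _ (h1 p hp))) t (h2.trans ht)

theorem Reg.zero {K : Type} [Field K] {X : Finset (P2 K)} {β : P2 K → ℤ} (τ : ℤ)
    (h1 : ∀ p ∈ X, β p ≤ 0) : Reg X β τ := by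
  intro μ hμ t ht
  have h0 : ∀ p ∈ X, μ p = 0 := by
    intro p hp
    have := hμ p hp
    rw [max_eq_right (h1 p hp)] at this
    omega
  rw [dimI_congr X μ (fun _ => 0) h0, dimI_zero,
    Finset.sum_eq_zero (fun p hp => by rw [h0 p hp]; rfl)]
  simp

open Classical in
theorem choose_subL {K : Type} [Field K] (X : Finset (P2 K)) (μ : P2 K → ℕ) (L : ProjLine K) :
    ∑ p ∈ X, (μ p + 1).choose 2 =
      ∑ p ∈ X, (subL μ L p + 1).choose 2 + ∑ p ∈ X with p ∈ L.points, μ p := by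
  rw [Finset.sum_filter, ← Finset.sum_add_distrib]
  refine Finset.sum_congr rfl fun p _ => ?_
  unfold subL
  split_ifs
  · rcases Nat.eq_zero_or_pos (μ p) with h | h
    · simp [h]
    · obtain ⟨k, hk⟩ := Nat.exists_eq_succ_of_ne_zero h.ne'
      rw [hk]; simp [Nat.choose_succ_succ]; ring
  · simp

open Classical in
theorem Reg.step {K : Type} [Field K] [Infinite K] {X : Finset (P2 K)} {β : P2 K → ℤ} {τ : ℤ}
    (L : ProjLine K) (hs : ∑ p ∈ X with p ∈ L.points, max 0 (β p) ≤ τ)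
    (h : Reg X (fun p => β p - ind L p) (τ - 1)) : Reg X β τ := by
  intro μ hμ t ht
  have hle : ∑ p ∈ X with p ∈ L.points, (μ p : ℤ) ≤ τ := by
    refine (Finset.sum_le_sum fun p hp => ?_).trans hs
    rw [max_comm]; exact hμ p (Finset.mem_filter.1 hp).1
  have hle' : ∑ p ∈ X with p ∈ L.points, μ p ≤ t := by
    have := hle.trans ht
    exact_mod_cast this
  cases t with
  | zero =>
    refine h μ (fun p hp => ?_) 0 (by omega)
    by_cases hpL : p ∈ L.points
    · have h0 : μ p = 0 := by
        have := Finset.sum_eq_zero_iff.1 (Nat.le_zero.1 hle') p (Finset.mem_filter.2 ⟨hp, hpL⟩)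
        exact this
      simp [h0]
    · simpa [ind, hpL] using hμ p hp
  | succ t =>
    have h1 := h (subL μ L) (fun p hp => by
      have := hμ p hp
      unfold subL ind
      beta_reduce
      split_ifs <;> omega) t (by push_cast at ht; omega)
    have h2 := dimI_upper X μ L t
    have h3 := dimI_lower X μ (t + 1)
    have h4 := choose_subL X μ L
    have h5 : (t + 1 + 1).choose 2 = (t + 1).choose 2 + (t + 1) := by
      simp [Nat.choose_succ_succ (t + 1) 1]; ring
    omega

open Classical in
theorem Reg.round {K ι : Type} [Field K] [Infinite K] [LinearOrder ι] {X : Finset (P2 K)}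
    (M : ι → ProjLine K) (S : Finset ι) : ∀ {β : P2 K → ℤ} {τ : ℤ},
    (∀ i ∈ S, ∑ p ∈ X with p ∈ (M i).points, max 0 (β p - ∑ j ∈ S with i < j, ind (M j) p)
      ≤ τ - ((S.filter (i < ·)).card : ℤ)) →
    Reg X (fun p => β p - ∑ j ∈ S, ind (M j) p) (τ - S.card) → Reg X β τ := by
  induction S using Finset.induction_on_max with
  | empty =>
    intro β τ _ h
    simpa using h
  | insert a S ha ih =>
    intro β τ h1 h2
    have haS : a ∉ S := fun h => lt_irrefl _ (ha a h)
    refine Reg.step (M a) ?_ (ih ?_ ?_)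
    · have h := h1 a (Finset.mem_insert_self _ _)
      have e : (insert a S).filter (a < ·) = ∅ := by
        rw [Finset.filter_eq_empty_iff]
        intro j hj
        rcases Finset.mem_insert.1 hj with rfl | hj
        · exact lt_irrefl _
        · exact (ha j hj).not_gt
      rw [e] at h
      simpa using h
    · intro i hi
      have h := h1 i (Finset.mem_insert_of_mem hi)
      rw [Finset.filter_insert, if_pos (ha i hi)] at h
      have haf : a ∉ S.filter (i < ·) := fun h => haS (Finset.mem_filter.1 h).1
      rw [Finset.card_insert_of_notMem haf] at h
      simp only [Finset.sum_insert haf] at h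
      push_cast at h
      have e : ∀ p, β p - ind (M a) p - ∑ j ∈ S with i < j, ind (M j) p =
        β p - (ind (M a) p + ∑ j ∈ S with i < j, ind (M j) p) := fun p => by ring
      simp only [e]
      linarith
    · rw [Finset.card_insert_of_notMem haS] at h2
      simp only [Finset.sum_insert haS] at h2
      refine h2.mono (fun p _ => by linarith) (by push_cast; linarith)

/-- lines through two distinct points coincide -/
theorem line_eq {K : Type} [Field K] {L L' : ProjLine K} {p q : P2 K} (hpq : p ≠ q)
    (h1 : p ∈ L.points) (h2 : q ∈ L.points) (h3 : p ∈ L'.points) (h4 : q ∈ L'.points) :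
    L = L' := by
  have hli : LinearIndependent K ![p.rep, q.rep] := by
    rw [LinearIndependent.pair_iff' p.rep_nonzero]
    intro a ha
    refine hpq (eq_of_rep_smul p q p.rep 1 a (by simp) ha.symm)
  have key : ∀ M : ProjLine K, p ∈ M.points → q ∈ M.points →
      M.toSubmodule = Submodule.span K (Set.range ![p.rep, q.rep]) := by
    intro M hp hq
    symm
    have hle : Submodule.span K (Set.range ![p.rep, q.rep]) ≤ M.toSubmodule := by
      rw [Submodule.span_le]
      rintro _ ⟨i, rfl⟩
      fin_cases i
      · exact (mem_points_iff _ _).1 hp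
      · exact (mem_points_iff _ _).1 hq
    refine Submodule.eq_of_le_of_finrank_eq hle ?_
    rw [finrank_span_eq_card hli, M.finrank_eq_two]
    simp
  have e : L.toSubmodule = L'.toSubmodule := by rw [key L h1 h2, key L' h3 h4]
  cases L; cases L'; simp at e; simp [e]

theorem pt_eq {K : Type} [Field K] {L L' : ProjLine K} {p q : P2 K} (hL : L ≠ L')
    (h1 : p ∈ L.points) (h2 : q ∈ L.points) (h3 : p ∈ L'.points) (h4 : q ∈ L'.points) :
    p = q := by
  by_contra h
  exact hL (line_eq h h1 h2 h3 h4)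

theorem exists_line {K : Type} [Field K] (p q : P2 K) (hpq : p ≠ q) :
    ∃ L : ProjLine K, p ∈ L.points ∧ q ∈ L.points := by
  have hli : LinearIndependent K ![p.rep, q.rep] := by
    rw [LinearIndependent.pair_iff' p.rep_nonzero]
    intro a ha
    refine hpq (eq_of_rep_smul p q p.rep 1 a (by simp) ha.symm)
  refine ⟨⟨Submodule.span K (Set.range ![p.rep, q.rep]), ?_⟩, ?_, ?_⟩
  · rw [finrank_span_eq_card hli]; simp
  · rw [mem_points_iff]; exact Submodule.subset_span ⟨0, rfl⟩
  · rw [mem_points_iff]; exact Submodule.subset_span ⟨1, rfl⟩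

open Classical in
/-- removing full lines -/
theorem dimI_full {K : Type} [Field K] [Infinite K] (X : Finset (P2 K)) (m D : ℕ)
    (F : Finset (ProjLine K)) (hF : ∀ L ∈ F, (X.filter (· ∈ L.points)).card = D) :
    ∀ t : ℕ, t + F.card ≤ m * D →
    dimI X (fun _ => m) (t + F.card) =
      dimI X (fun p => m - (F.filter (fun L => p ∈ L.points)).card) t := by
  induction F using Finset.induction_on with
  | empty => intro t _; simp
  | insert L F hL ih =>
    intro t ht
    rw [Finset.card_insert_of_notMem hL] at ht ⊢
    have h1 := ih (fun L' h => hF L' (Finset.mem_insert_of_mem h)) (t + 1) (by omega)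
    rw [show t + (F.card + 1) = t + 1 + F.card by omega, h1]
    set W : P2 K → ℕ := fun p => m - (F.filter (fun L => p ∈ L.points)).card with hW
    have hsub : ∀ p, subL W L p = m - ((insert L F).filter (fun L => p ∈ L.points)).card := by
      intro p
      rw [Finset.filter_insert]
      unfold subL
      split_ifs with hp
      · rw [Finset.card_insert_of_notMem (fun h => hL (Finset.mem_filter.1 h).1)]
        simp only [hW]; omega
      · simp [hW]
    rw [← dimI_congr X (subL W L) _ (fun p _ => hsub p)]
    refine le_antisymm ?_ (dimI_mul X W L t)
    have h2 := dimI_upper X W L t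
    have h3 : m * D ≤ ∑ p ∈ X with p ∈ L.points, W p + F.card := by
      have e1 : m * D = ∑ p ∈ X with p ∈ L.points, m := by
        rw [Finset.sum_const, hF L (Finset.mem_insert_self _ _), smul_eq_mul, mul_comm]
      have e2 : ∑ p ∈ X with p ∈ L.points, (F.filter (fun L => p ∈ L.points)).card ≤ F.card := by
        simp only [Finset.card_filter]
        rw [Finset.sum_comm, Finset.card_eq_sum_ones]
        refine Finset.sum_le_sum fun L' hL' => ?_
        rw [← Finset.card_filter, Finset.card_le_one]
        intro a ha b hb
        simp only [Finset.mem_filter] at ha hb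
        exact pt_eq (L := L) (L' := L') (fun h => hL (h ▸ hL')) ha.1.2 hb.1.2 ha.2 hb.2
      rw [e1]
      refine le_trans ?_ (Nat.add_le_add_left e2 _)
      rw [← Finset.sum_add_distrib]
      refine Finset.sum_le_sum fun p _ => ?_
      simp only [hW]; omega
    omega

open Classical in
theorem main_of_reg {K : Type} [Field K] [Infinite K] (X : Finset (P2 K)) (m D : ℕ)
    (F : Finset (ProjLine K)) (hF : ∀ L, L ∈ F ↔ (X.filter (· ∈ L.points)).card = D)
    (hN : F.card + 1 ≤ m * D) (h2 : 2 ≤ m * D)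
    (hreg : Reg X (fun p => (m : ℤ) - ∑ L ∈ F, ind L p) ((m : ℤ) * D - 1 - F.card)) :
    deltaHilb (fatIdeal (X : Set (P2 K)) m) ((m : ℤ) * D - 1) =
      ({L : ProjLine K | ((X : Set (P2 K)) ∩ L.points).ncard = D}.ncard : ℤ) := by
  have e0 : {L : ProjLine K | ((X : Set (P2 K)) ∩ L.points).ncard = D} = (F : Set (ProjLine K)) := by
    ext L
    have : (X : Set (P2 K)) ∩ L.points = ((X.filter (· ∈ L.points) : Finset (P2 K)) : Set (P2 K)) := by
      ext p; simp
    rw [Set.mem_ofPred_eq, this, Set.ncard_coe_finset, ← hF]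
    simp
  rw [e0, Set.ncard_coe_finset]
  have hfat : fatIdeal (X : Set (P2 K)) m = mIdeal X (fun _ => m) := by
    simp [fatIdeal, mIdeal]
  have hh : ∀ t : ℕ, (hilb (fatIdeal (X : Set (P2 K)) m) t : ℤ) =
      ((t + 2).choose 2 : ℤ) - dimI X (fun _ => m) (t + 1) := by
    intro t
    have : hilb (fatIdeal (X : Set (P2 K)) m) t =
        (t + 2).choose 2 - dimI X (fun _ => m) (t + 1) := by
      rw [hfat, hilb, finrank_hom]; rfl
    rw [this, Nat.cast_sub]
    rw [← finrank_hom (K := K) t]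
    exact Submodule.finrank_mono inf_le_right
  obtain ⟨T, hT⟩ : ∃ T, m * D = T + 2 := ⟨m * D - 2, by omega⟩
  have hTz : (m : ℤ) * D = T + 2 := by exact_mod_cast hT
  have hT2 : (m : ℤ) * D - 1 - 1 = T := by rw [hTz]; ring
  have hT1 : (m : ℤ) * D - 1 = ((T + 1 : ℕ) : ℤ) := by rw [hTz]; push_cast; ring
  rw [deltaHilb, hT2, hT1, hilbZ, hilbZ, if_neg (by omega), if_neg (by omega), Int.toNat_natCast,
    Int.toNat_natCast, hh, hh]
  have hFL : ∀ L ∈ F, (X.filter (· ∈ L.points)).card = D := fun L h => (hF L).1 h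
  have hsum : ∀ p, ∑ L ∈ F, ind L p = ((F.filter (fun L => p ∈ L.points)).card : ℤ) := by
    intro p; simp [ind]
  have r : ∀ t : ℕ, t + F.card ≤ m * D → m * D ≤ t + 1 + F.card →
      dimI X (fun _ => m) (t + F.card) + ∑ p ∈ X, (m - (F.filter (fun L => p ∈ L.points)).card + 1).choose 2
        = (t + 1).choose 2 := by
    intro t ht ht2
    rw [dimI_full X m D F hFL t ht]
    refine hreg (fun p => m - (F.filter (fun L => p ∈ L.points)).card) (fun p _ => ?_) t ?_
    · beta_reduce; rw [hsum]; omega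
    · have : (m : ℤ) * D ≤ t + 1 + F.card := by exact_mod_cast ht2
      linarith
  obtain ⟨t, ht⟩ : ∃ t, T + 1 = t + F.card := ⟨T + 1 - F.card, by omega⟩
  have r1 := r t (by omega) (by omega)
  have r2 := r (t + 1) (by omega) (by omega)
  rw [← ht] at r1
  rw [show t + 1 + F.card = T + 1 + 1 by omega] at r2
  have c1 : (t + 1 + 1).choose 2 = (t + 1).choose 2 + (t + 1) := by
    simp [Nat.choose_succ_succ (t + 1) 1]; ring
  have c2 : (T + 1 + 2).choose 2 = (T + 2).choose 2 + (T + 2) := by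
    rw [show T + 1 + 2 = (T + 2) + 1 by ring, Nat.choose_succ_succ (T + 2) 1]; simp; ring
  push_cast [c2]
  zify at r1 r2 c1 ht
  linarith


/-- finset version of a k-configuration -/
structure Cfg {K : Type} [Field K] {s : ℕ} (X : Finset (P2 K)) (Y : Fin s → Finset (P2 K))
    (Ls : Fin s → ProjLine K) (D : ℕ) : Prop where
  mem : ∀ p, p ∈ X ↔ ∃ i, p ∈ Y i
  sub : ∀ i, ∀ p ∈ Y i, p ∈ (Ls i).points
  nm : ∀ i j, j < i → ∀ p ∈ Y j, p ∉ (Ls i).points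
  one : ∀ i, 1 ≤ (Y i).card
  mono : StrictMono fun i => (Y i).card
  inj : Function.Injective Ls
  last : ∀ i : Fin s, (i : ℕ) + 1 = s → (Y i).card = D

namespace Cfg

variable {K : Type} [Field K] {s : ℕ} {X : Finset (P2 K)} {Y : Fin s → Finset (P2 K)}
    {Ls : Fin s → ProjLine K} {D : ℕ}

open Classical in
/-- points of `X` on a line -/
noncomputable def on (X : Finset (P2 K)) (L : ProjLine K) : Finset (P2 K) :=
  X.filter (· ∈ L.points)

open Classical in
/-- extra points -/
noncomputable def extra (X : Finset (P2 K)) (Y : Fin s → Finset (P2 K))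
    (Ls : Fin s → ProjLine K) (i : Fin s) : Finset (P2 K) :=
  (on X (Ls i)).filter (· ∉ Y i)

theorem mem_on {L : ProjLine K} {p : P2 K} : p ∈ on X L ↔ p ∈ X ∧ p ∈ L.points := by
  classical
  simp [on]

theorem subX (h : Cfg X Y Ls D) {i : Fin s} {p : P2 K} (hp : p ∈ Y i) : p ∈ X :=
  (h.mem p).2 ⟨i, hp⟩

theorem le_of_on (h : Cfg X Y Ls D) {i j : Fin s} {p : P2 K} (hp : p ∈ Y j)
    (hpi : p ∈ (Ls i).points) : i ≤ j := by
  by_contra hc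
  exact h.nm i j (not_le.1 hc) p hp hpi

theorem uniq (h : Cfg X Y Ls D) {i j : Fin s} {p : P2 K} (hp : p ∈ Y i) (hq : p ∈ Y j) : i = j :=
  le_antisymm (h.le_of_on hq (h.sub i p hp)) (h.le_of_on hp (h.sub j p hq))

theorem mem_extra (h : Cfg X Y Ls D) {i : Fin s} {p : P2 K} :
    p ∈ extra X Y Ls i ↔ p ∈ (Ls i).points ∧ ∃ j, i < j ∧ p ∈ Y j := by
  classical
  rw [extra, Finset.mem_filter, mem_on]
  constructor
  · rintro ⟨⟨h1, h2⟩, h3⟩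
    obtain ⟨j, hj⟩ := (h.mem p).1 h1
    refine ⟨h2, j, lt_of_le_of_ne (h.le_of_on hj h2) ?_, hj⟩
    rintro rfl; exact h3 hj
  · rintro ⟨h1, j, hij, hj⟩
    exact ⟨⟨h.subX hj, h1⟩, fun hi => hij.ne (h.uniq hi hj)⟩

theorem on_eq [DecidableEq (P2 K)] (h : Cfg X Y Ls D) (i : Fin s) :
    on X (Ls i) = Y i ∪ extra X Y Ls i := by
  ext p
  rw [Finset.mem_union, mem_on]
  constructor
  · rintro ⟨h1, h2⟩
    by_cases hp : p ∈ Y i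
    · exact Or.inl hp
    · right
      obtain ⟨j, hj⟩ := (h.mem p).1 h1
      refine h.mem_extra.2 ⟨h2, j, lt_of_le_of_ne (h.le_of_on hj h2) ?_, hj⟩
      rintro rfl; exact hp hj
  · rintro (hp | hp)
    · exact ⟨h.subX hp, h.sub i p hp⟩
    · obtain ⟨h1, j, _, hj⟩ := h.mem_extra.1 hp
      exact ⟨h.subX hj, h1⟩

theorem disj (h : Cfg X Y Ls D) (i : Fin s) : Disjoint (Y i) (extra X Y Ls i) := by
  rw [Finset.disjoint_left]
  intro p hp hq
  obtain ⟨_, j, hij, hj⟩ := h.mem_extra.1 hq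
  exact hij.ne (h.uniq hp hj)

theorem card_on (h : Cfg X Y Ls D) (i : Fin s) :
    (on X (Ls i)).card = (Y i).card + (extra X Y Ls i).card := by
  classical
  rw [h.on_eq, Finset.card_union_of_disjoint (h.disj i)]

theorem add_le (h : Cfg X Y Ls D) (i : Fin s) : (Y i).card + (s - 1 - i) ≤ D := by
  have key : ∀ k : ℕ, ∀ hk : (i : ℕ) + k < s, (Y i).card + k ≤ (Y ⟨i + k, hk⟩).card := by
    intro k
    induction k with
    | zero => intro hk; rfl
    | succ k ih =>
      intro hk
      have h1 := ih (by omega)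
      have h2 : (Y ⟨i + k, by omega⟩).card < (Y ⟨i + (k + 1), hk⟩).card := by
        apply h.mono
        rw [Fin.lt_def]; simp
      omega
  have hi := i.2
  have h1 := key (s - 1 - i) (by omega)
  have h2 := h.last ⟨i + (s - 1 - i), by omega⟩ (by simp only; omega)
  omega

theorem card_le_meet (h : Cfg X Y Ls D) (L : ProjLine K) (T : Finset (P2 K)) (J : Finset (Fin s))
    (hT : ∀ p ∈ T, p ∈ L.points ∧ ∃ j ∈ J, Ls j ≠ L ∧ p ∈ Y j) : T.card ≤ J.card := by
  classical
  rcases T.eq_empty_or_nonempty with rfl | ⟨p0, hp0⟩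
  · simp
  have : Nonempty (Fin s) := by
    obtain ⟨_, j, _⟩ := hT p0 hp0
    exact ⟨j⟩
  choose! hL f hf using hT
  refine Finset.card_le_card_of_injOn f (fun p hp => (hf p hp).1) ?_
  intro p hp q hq hpq
  have h1 := hf p hp
  have h2 := hf q hq
  rw [← hpq] at h2
  exact pt_eq h1.2.1 (h.sub _ p h1.2.2) (h.sub _ q h2.2.2) (hL p hp) (hL q hq)

theorem extra_le (h : Cfg X Y Ls D) (i : Fin s) : (extra X Y Ls i).card ≤ s - 1 - i := by
  have := h.card_le_meet (Ls i) (extra X Y Ls i) (Finset.Ioi i) (fun p hp => by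
    obtain ⟨h1, j, hij, hj⟩ := h.mem_extra.1 hp
    exact ⟨h1, j, Finset.mem_Ioi.2 hij, fun e => hij.ne' (h.inj e), hj⟩)
  rwa [Fin.card_Ioi] at this

theorem extra_lt (h : Cfg X Y Ls D) {i j : Fin s} (hij : i < j)
    (hj : ∀ p ∈ Y j, p ∉ (Ls i).points) : (extra X Y Ls i).card + 1 ≤ s - 1 - i := by
  classical
  have hm : j ∈ Finset.Ioi i := Finset.mem_Ioi.2 hij
  have := h.card_le_meet (Ls i) (extra X Y Ls i) ((Finset.Ioi i).erase j) (fun p hp => by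
    obtain ⟨h1, k, hik, hk⟩ := h.mem_extra.1 hp
    refine ⟨h1, k, Finset.mem_erase.2 ⟨?_, Finset.mem_Ioi.2 hik⟩, fun e => hik.ne' (h.inj e), hk⟩
    rintro rfl; exact hj p hk h1)
  have h2 := Finset.card_erase_add_one hm
  rw [Fin.card_Ioi] at h2
  omega

theorem full_meet (h : Cfg X Y Ls D) {i j : Fin s} (hi : (on X (Ls i)).card = D) (hij : i < j) :
    ∃ p ∈ Y j, p ∈ (Ls i).points := by
  by_contra hc
  push Not at hc
  have h1 := h.extra_lt hij hc
  have h2 := h.add_le i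
  rw [h.card_on] at hi
  omega

theorem s_le (h : Cfg X Y Ls D) (hs : 0 < s) : s ≤ D := by
  have h1 := h.add_le ⟨0, hs⟩
  have h2 := h.one ⟨0, hs⟩
  simp at h1
  omega

theorem other_le (h : Cfg X Y Ls D) {L : ProjLine K} (hL : ∀ i, Ls i ≠ L) :
    (on X L).card ≤ s := by
  have := h.card_le_meet L (on X L) Finset.univ (fun p hp => by
    obtain ⟨h1, h2⟩ := mem_on.1 hp
    obtain ⟨j, hj⟩ := (h.mem p).1 h1
    exact ⟨h2, j, Finset.mem_univ _, hL j, hj⟩)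
  simpa using this

theorem other_meet (h : Cfg X Y Ls D) {L : ProjLine K} (hL : ∀ i, Ls i ≠ L)
    (hc : (on X L).card = s) (i : Fin s) : ∃ p ∈ Y i, p ∈ L.points := by
  classical
  by_contra hcon
  push Not at hcon
  have := h.card_le_meet L (on X L) (Finset.univ.erase i) (fun p hp => by
    obtain ⟨h1, h2⟩ := mem_on.1 hp
    obtain ⟨j, hj⟩ := (h.mem p).1 h1
    refine ⟨h2, j, Finset.mem_erase.2 ⟨?_, Finset.mem_univ _⟩, hL j, hj⟩
    rintro rfl; exact hcon p hj h2)
  have h2 := Finset.card_erase_add_one (Finset.mem_univ i)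
  rw [Finset.card_univ, Fintype.card_fin] at h2
  omega

theorem le_D (h : Cfg X Y Ls D) (hs : 0 < s) (L : ProjLine K) : (on X L).card ≤ D := by
  by_cases hL : ∀ i, Ls i ≠ L
  · exact (h.other_le hL).trans (h.s_le hs)
  · push Not at hL
    obtain ⟨i, rfl⟩ := hL
    rw [h.card_on]
    have h1 := h.add_le i
    have h2 := h.extra_le i
    omega

/-- two earlier full lines do not meet in `Y i` -/
theorem full_two (h : Cfg X Y Ls D) {j k i : Fin s} (hj : (on X (Ls j)).card = D)
    (hjk : j < k) (hki : k < i) {p : P2 K} (hp : p ∈ Y i) (h1 : p ∈ (Ls j).points)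
    (h2 : p ∈ (Ls k).points) : False := by
  obtain ⟨q, hq, hqj⟩ := h.full_meet hj hjk
  have : p = q := pt_eq (fun e => hjk.ne (h.inj e)) h1 hqj h2 (h.sub k q hq)
  subst this
  exact hki.ne (h.uniq hq hp)

theorem line_bound (h : Cfg X Y Ls D) (i : Fin s) (f c : P2 K → ℤ) (a b : ℤ) (hb : 0 ≤ b)
    (h1 : ∀ p ∈ Y i, f p ≤ a - c p) (h2 : ∀ p ∈ Y i, c p ≤ a)
    (h3 : ∀ p ∈ extra X Y Ls i, f p ≤ b) :
    ∑ p ∈ on X (Ls i), max 0 (f p) ≤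
      (Y i).card * a - ∑ p ∈ Y i, c p + (extra X Y Ls i).card * b := by
  classical
  rw [h.on_eq, Finset.sum_union (h.disj i)]
  refine add_le_add ?_ ?_
  · have : ((Y i).card : ℤ) * a - ∑ p ∈ Y i, c p = ∑ p ∈ Y i, (a - c p) := by
      rw [Finset.sum_sub_distrib]; simp
    rw [this]
    refine Finset.sum_le_sum fun p hp => max_le (by linarith [h2 p hp]) (h1 p hp)
  · rw [← nsmul_eq_mul]
    exact Finset.sum_le_card_nsmul _ _ _ fun p hp => max_le hb (h3 p hp)

end Cfg

theorem sum_ind_ge {K ι : Type} [Field K] (T : Finset (P2 K)) (S : Finset ι) (M : ι → ProjLine K)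
    (h : ∀ j ∈ S, ∃ p ∈ T, p ∈ (M j).points) :
    (S.card : ℤ) ≤ ∑ p ∈ T, ∑ j ∈ S, ind (M j) p := by
  rw [Finset.sum_comm, Finset.card_eq_sum_ones]
  push_cast
  refine Finset.sum_le_sum fun j hj => ?_
  obtain ⟨p, hp, hpj⟩ := h j hj
  rw [← ind_of_mem hpj]
  exact Finset.single_le_sum (f := fun p => ind (M j) p) (fun q _ => ind_nonneg _ _) hp

theorem sum_ind_le_one {K ι : Type} [Field K] (S : Finset ι) (M : ι → ProjLine K) (p : P2 K)
    (h : ∀ j ∈ S, ∀ k ∈ S, p ∈ (M j).points → p ∈ (M k).points → j = k) :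
    ∑ j ∈ S, ind (M j) p ≤ 1 := by
  classical
  have : ∑ j ∈ S, ind (M j) p = ((S.filter fun j => p ∈ (M j).points).card : ℤ) := by simp [ind]
  rw [this]
  have h2 : (S.filter fun j => p ∈ (M j).points).card ≤ 1 := by
    rw [Finset.card_le_one]
    intro a ha b hb
    simp only [Finset.mem_filter] at ha hb
    exact h a ha.1 b hb.1 ha.2 hb.2
  exact_mod_cast h2

theorem sum_ind_nonneg {K ι : Type} [Field K] (S : Finset ι) (M : ι → ProjLine K) (p : P2 K) :
    0 ≤ ∑ j ∈ S, ind (M j) p := Finset.sum_nonneg fun _ _ => ind_nonneg _ _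

theorem sum_ind_pos {K ι : Type} [Field K] (S : Finset ι) (M : ι → ProjLine K) (p : P2 K) {j : ι}
    (hj : j ∈ S) (h : p ∈ (M j).points) : 1 ≤ ∑ j ∈ S, ind (M j) p := by
  rw [← ind_of_mem h]
  exact Finset.single_le_sum (f := fun j => ind (M j) p) (fun q _ => ind_nonneg _ _) hj

theorem sum_ind_two {K ι : Type} [Field K] (S : Finset ι) (M : ι → ProjLine K) (p : P2 K) {j k : ι}
    (hj : j ∈ S) (hk : k ∈ S) (hjk : j ≠ k) (h : p ∈ (M j).points) (h' : p ∈ (M k).points) :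
    2 ≤ ∑ j ∈ S, ind (M j) p := by
  classical
  rw [← Finset.add_sum_erase S _ hj, ind_of_mem h]
  have := sum_ind_pos (S.erase j) M p (Finset.mem_erase.2 ⟨hjk.symm, hk⟩) h'
  linarith

theorem sum_ind_mono {K ι : Type} [Field K] {S T : Finset ι} (hST : S ⊆ T) (M : ι → ProjLine K)
    (p : P2 K) : ∑ j ∈ S, ind (M j) p ≤ ∑ j ∈ T, ind (M j) p :=
  Finset.sum_le_sum_of_subset_of_nonneg hST fun _ _ _ => ind_nonneg _ _


namespace Cfg

variable {K : Type} [Field K] [Infinite K] {s : ℕ} {X : Finset (P2 K)} {Y : Fin s → Finset (P2 K)}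
    {Ls : Fin s → ProjLine K} {D : ℕ}

theorem card_Ioi_int (i : Fin s) : ((Finset.Ioi i).card : ℤ) = s - 1 - i := by
  rw [Fin.card_Ioi]
  have := i.2
  omega

theorem extra_le_int (h : Cfg X Y Ls D) (i : Fin s) :
    ((extra X Y Ls i).card : ℤ) ≤ s - 1 - i := by
  have := h.extra_le i
  have := i.2
  omega

theorem add_le_int (h : Cfg X Y Ls D) (i : Fin s) :
    ((Y i).card : ℤ) + (s - 1 - i) ≤ D := by
  have := h.add_le i
  have := i.2
  omega

open Classical in
theorem round0 {ι : Type} (h : Cfg X Y Ls D) (m : ℕ) (hm : 2 ≤ m) (J : Finset (Fin s))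
    (hJ : ∀ i ∈ J, ∀ j, i < j → j ∈ J) (A : Finset ι) (M : ι → ProjLine K)
    (hA1 : ∀ q ∈ A, ∀ i ∈ J, ∃ p ∈ Y i, p ∈ (M q).points)
    (hA2 : ∀ i ∈ J, ∀ p ∈ Y i, ∑ q ∈ A, ind (M q) p ≤ 1)
    (hr : Reg X (fun p => (m : ℤ) - ∑ j ∈ J, ind (Ls j) p - ∑ q ∈ A, ind (M q) p)
      ((m : ℤ) * D - 1 - J.card - A.card)) :
    Reg X (fun p => (m : ℤ) - ∑ j ∈ J with (on X (Ls j)).card = D, ind (Ls j) p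
        - ∑ q ∈ A, ind (M q) p)
      ((m : ℤ) * D - 1 - (J.filter fun j => (on X (Ls j)).card = D).card - A.card) := by
  set Fi := J.filter fun j => (on X (Ls j)).card = D with hFi
  set S := J.filter fun j => ¬ (on X (Ls j)).card = D with hS
  have hcard : Fi.card + S.card = J.card := Finset.card_filter_add_card_filter_not _
  have hsum : ∀ p, ∑ j ∈ Fi, ind (Ls j) p + ∑ j ∈ S, ind (Ls j) p = ∑ j ∈ J, ind (Ls j) p :=
    fun p => Finset.sum_filter_add_sum_filter_not _ _ _
  refine Reg.round Ls S ?_ (hr.mono (fun p _ => ?_) ?_)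
  swap
  · have := hsum p
    linarith
  swap
  · zify at hcard
    linarith
  intro i hi
  obtain ⟨hiJ, hinf⟩ := Finset.mem_filter.1 hi
  change ∑ p ∈ on X (Ls i), _ ≤ _
  have hb := h.line_bound i (fun p => (m : ℤ) - ∑ j ∈ Fi, ind (Ls j) p - ∑ q ∈ A, ind (M q) p
      - ∑ j ∈ S with i < j, ind (Ls j) p)
    (fun p => ∑ j ∈ Fi with j < i, ind (Ls j) p + ∑ q ∈ A, ind (M q) p) m (m - 1) (by omega)
    (fun p hp => by
      have h1 := sum_ind_mono (Finset.filter_subset (· < i) Fi) Ls p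
      have h2 := sum_ind_nonneg (S.filter (i < ·)) Ls p
      beta_reduce
      linarith)
    (fun p hp => by
      have h1 := hA2 i hiJ p hp
      have h2 : ∑ j ∈ Fi with j < i, ind (Ls j) p ≤ 1 := by
        refine sum_ind_le_one _ _ _ fun j hj k hk hpj hpk => ?_
        obtain ⟨hj1, hj2⟩ := Finset.mem_filter.1 hj
        obtain ⟨hk1, hk2⟩ := Finset.mem_filter.1 hk
        rcases lt_trichotomy j k with hjk | hjk | hjk
        · exact (h.full_two (Finset.mem_filter.1 hj1).2 hjk hk2 hp hpj hpk).elim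
        · exact hjk
        · exact (h.full_two (Finset.mem_filter.1 hk1).2 hjk hj2 hp hpk hpj).elim
      have : (2 : ℤ) ≤ m := by exact_mod_cast hm
      beta_reduce
      linarith)
    (fun p hp => by
      obtain ⟨h1, j, hij, hj⟩ := h.mem_extra.1 hp
      have hjJ := hJ i hiJ j hij
      have h2 := sum_ind_nonneg A M p
      beta_reduce
      by_cases hfull : (on X (Ls j)).card = D
      · have h3 := sum_ind_pos Fi Ls p (Finset.mem_filter.2 ⟨hjJ, hfull⟩) (h.sub j p hj)
        have h4 := sum_ind_nonneg (S.filter (i < ·)) Ls p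
        linarith
      · have h3 := sum_ind_pos (S.filter (i < ·)) Ls p (Finset.mem_filter.2
          ⟨Finset.mem_filter.2 ⟨hjJ, hfull⟩, hij⟩) (h.sub j p hj)
        have h4 := sum_ind_nonneg Fi Ls p
        linarith)
  refine hb.trans ?_
  rw [Finset.sum_add_distrib]
  have g1 := sum_ind_ge (Y i) (Fi.filter (· < i)) Ls (fun j hj => by
    obtain ⟨hj1, hj2⟩ := Finset.mem_filter.1 hj
    exact h.full_meet (Finset.mem_filter.1 hj1).2 hj2)
  have g2 := sum_ind_ge (Y i) A M (fun q hq => hA1 q hq i hiJ)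
  have g3 : Fi.card = (Fi.filter (· < i)).card + (Fi.filter (i < ·)).card := by
    rw [← Finset.card_filter_add_card_filter_not (s := Fi) (· < i)]
    congr 2
    refine Finset.filter_congr fun j hj => ?_
    rw [not_lt]
    refine ⟨fun hle => lt_of_le_of_ne hle ?_, le_of_lt⟩
    rintro rfl
    exact hinf (Finset.mem_filter.1 hj).2
  have g4 : (Fi.filter (i < ·)).card + (S.filter (i < ·)).card = (Finset.Ioi i).card := by
    rw [← Finset.card_union_of_disjoint]
    · congr 1
      ext j
      simp only [Finset.mem_union, Finset.mem_filter, Finset.mem_Ioi, hFi, hS]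
      have := hJ i hiJ j
      tauto
    · rw [Finset.disjoint_left]
      intro j hj hj'
      simp only [Finset.mem_filter, hFi, hS] at hj hj'
      exact hj'.1.2 hj.1.2
  have g5 := card_Ioi_int i
  have g6 := h.extra_le_int i
  have g7 := h.add_le_int i
  have g8 : ((Y i).card : ℤ) + (extra X Y Ls i).card + 1 ≤ D := by
    have := h.le_D (lt_of_le_of_lt (Nat.zero_le _) i.2) (Ls i)
    rw [h.card_on] at this hinf
    omega
  have hm' : (2 : ℤ) ≤ m := by exact_mod_cast hm
  zify at g3 g4
  rw [g5] at g4
  set e : ℤ := ((extra X Y Ls i).card : ℤ)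
  set dd : ℤ := ((Y i).card : ℤ)
  have key : 2 * (D - dd - e) ≤ m * (D - dd - e) := mul_le_mul_of_nonneg_right hm' (by linarith)
  linarith

/-- numeric inequality for full rounds -/
theorem round_num (m r D dd e k b : ℤ) (hr : 0 ≤ r) (hrm : r + 1 ≤ m) (hd : dd + k ≤ D)
    (he : e ≤ k) (hk : 0 ≤ k) (hb : b = max 0 (m - 2 * r - 1)) :
    dd * (m - r) + e * b ≤ m * D - r * D - k := by
  have h1 : dd * (m - r) ≤ (D - k) * (m - r) :=
    mul_le_mul_of_nonneg_right (by linarith) (by linarith)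
  have hb0 : 0 ≤ b := by rw [hb]; exact le_max_left _ _
  have h2 : e * b ≤ k * b := mul_le_mul_of_nonneg_right he hb0
  have h3 : k * b ≤ k * (m - r - 1) := by
    refine mul_le_mul_of_nonneg_left ?_ hk
    rw [hb]; exact max_le (by linarith) (by linarith)
  nlinarith

open Classical in
theorem caseI (h : Cfg X Y Ls D) (hD : s < D) (m : ℕ) (r : ℕ) (hr1 : 1 ≤ r) (hrm : r ≤ m) :
    Reg X (fun p => (m : ℤ) - r * ∑ j, ind (Ls j) p) ((m : ℤ) * D - 1 - r * s) := by
  induction hrm using Nat.decreasingInduction with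
  | self =>
    refine Reg.zero _ fun p hp => ?_
    obtain ⟨i, hi⟩ := (h.mem p).1 hp
    have h1 := sum_ind_pos Finset.univ Ls p (Finset.mem_univ i) (h.sub i p hi)
    have : (m : ℤ) * 1 ≤ m * ∑ j, ind (Ls j) p := mul_le_mul_of_nonneg_left h1 (by omega)
    linarith
  | of_succ r hrm ih =>
    refine Reg.round Ls Finset.univ ?_ ((ih (by omega)).mono (fun p _ => ?_) ?_)
    swap
    · push_cast; linarith
    swap
    · simp only [Finset.card_univ, Fintype.card_fin]; push_cast; linarith
    intro i _
    change ∑ p ∈ on X (Ls i), _ ≤ _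
    have e : (Finset.univ.filter (i < ·)) = Finset.Ioi i := by ext j; simp
    simp only [e]
    have hr0 : (0 : ℤ) ≤ r := by omega
    have hb := h.line_bound i (fun p => (m : ℤ) - r * ∑ j, ind (Ls j) p
        - ∑ j ∈ Finset.Ioi i, ind (Ls j) p) (fun _ => 0) (m - r) (max 0 (m - 2 * r - 1))
      (le_max_left _ _)
      (fun p hp => by
        have h1 := sum_ind_pos Finset.univ Ls p (Finset.mem_univ i) (h.sub i p hp)
        have h2 := sum_ind_nonneg (Finset.Ioi i) Ls p
        have h3 := mul_le_mul_of_nonneg_left h1 hr0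
        beta_reduce
        linarith)
      (fun p _ => by beta_reduce; omega)
      (fun p hp => by
        obtain ⟨h1, j, hij, hj⟩ := h.mem_extra.1 hp
        have h2 := sum_ind_two Finset.univ Ls p (Finset.mem_univ i) (Finset.mem_univ j) hij.ne h1
          (h.sub j p hj)
        have h3 := sum_ind_pos (Finset.Ioi i) Ls p (Finset.mem_Ioi.2 hij) (h.sub j p hj)
        have h4 := mul_le_mul_of_nonneg_left h2 hr0
        refine le_max_of_le_right ?_
        linarith)
    refine hb.trans ?_
    have g := round_num m r D ((Y i).card) ((extra X Y Ls i).card) (s - 1 - i) _ hr0 (by omega)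
      (h.add_le_int i) (h.extra_le_int i) (by have := i.2; omega) rfl
    have g5 := card_Ioi_int i
    have g6 : (r : ℤ) * (s + 1) ≤ r * D := mul_le_mul_of_nonneg_left (by exact_mod_cast hD) hr0
    have g7 : (1 : ℤ) ≤ r := by exact_mod_cast hr1
    rw [g5]
    simp only [Finset.sum_const_zero]
    linarith

open Classical in
theorem mainI (h : Cfg X Y Ls D) (hs : 0 < s) (hD : s < D) (m : ℕ) (hm : 2 ≤ m) :
    deltaHilb (fatIdeal (X : Set (P2 K)) m) ((m : ℤ) * D - 1) =
      ({L : ProjLine K | ((X : Set (P2 K)) ∩ L.points).ncard = D}.ncard : ℤ) := by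
  set Fi := (Finset.univ : Finset (Fin s)).filter fun j => (on X (Ls j)).card = D with hFi
  have hFc : (Fi.image Ls).card = Fi.card := Finset.card_image_of_injective _ h.inj
  have hFs : Fi.card ≤ s := by
    refine (Finset.card_filter_le _ _).trans ?_
    simp
  have hmD : 2 * D ≤ m * D := Nat.mul_le_mul_right _ hm
  refine main_of_reg X m D (Fi.image Ls) ?_ (by omega) (by omega) ?_
  · intro L
    rw [Finset.mem_image]
    constructor
    · rintro ⟨i, hi, rfl⟩
      exact (Finset.mem_filter.1 hi).2
    · intro hL
      change (on X L).card = D at hL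
      by_cases hc : ∀ i, Ls i ≠ L
      · have := h.other_le hc
        omega
      · push Not at hc
        obtain ⟨i, rfl⟩ := hc
        exact ⟨i, Finset.mem_filter.2 ⟨Finset.mem_univ _, hL⟩, rfl⟩
  · rw [hFc]
    have h1 := h.caseI hD m 1 le_rfl (by omega)
    have h0 := h.round0 m hm Finset.univ (fun _ _ _ _ => Finset.mem_univ _)
      (∅ : Finset ℕ) (fun _ => Ls ⟨0, hs⟩) (by simp) (by simp) (h1.mono (fun p _ => by simp)
        (by simp))
    refine h0.mono (fun p _ => ?_) ?_
    · rw [Finset.sum_image (fun _ _ _ _ e => h.inj e)]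
      simp [hFi]
    · simp [hFi]

end Cfg


/-- configuration with `d_s = s` -/
structure Cfg2 {K : Type} [Field K] {s : ℕ} (X : Finset (P2 K)) (Y : Fin s → Finset (P2 K))
    (Ls : Fin s → ProjLine K) (P : P2 K) (M : P2 K → ProjLine K) (i0 last : Fin s) : Prop where
  cfg : Cfg X Y Ls s
  two : 2 ≤ s
  h0 : (i0 : ℕ) = 0
  hl : (last : ℕ) + 1 = s
  hP : Y i0 = {P}
  hM : ∀ q, q ≠ P → P ∈ (M q).points ∧ q ∈ (M q).points

namespace Cfg2

open Cfg

variable {K : Type} [Field K] {s : ℕ} {X : Finset (P2 K)} {Y : Fin s → Finset (P2 K)}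
    {Ls : Fin s → ProjLine K} {P : P2 K} {M : P2 K → ProjLine K} {i0 last : Fin s}

theorem memP (h : Cfg2 X Y Ls P M i0 last) : P ∈ Y i0 := by rw [h.hP]; simp

theorem P_notMem (h : Cfg2 X Y Ls P M i0 last) {j : Fin s} (hj : i0 < j) : P ∉ (Ls j).points :=
  h.cfg.nm j i0 hj P h.memP

theorem ne_P (h : Cfg2 X Y Ls P M i0 last) {j : Fin s} (hj : i0 < j) {q : P2 K} (hq : q ∈ Y j) :
    q ≠ P := by
  rintro rfl
  exact hj.ne (h.cfg.uniq h.memP hq)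

theorem exJ (h : Cfg2 X Y Ls P M i0 last) {p : P2 K} (hp : p ∈ X) (hpP : p ≠ P) :
    ∃ j, i0 < j ∧ p ∈ Y j := by
  obtain ⟨j, hj⟩ := (h.cfg.mem p).1 hp
  refine ⟨j, ?_, hj⟩
  rw [Fin.lt_def, h.h0, Nat.pos_iff_ne_zero]
  intro hj0
  have : j = i0 := Fin.ext (by rw [hj0, h.h0])
  rw [this, h.hP] at hj
  exact hpP (Finset.mem_singleton.1 hj)

theorem lastpos (h : Cfg2 X Y Ls P M i0 last) : i0 < last := by
  have := h.two
  have := h.hl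
  rw [Fin.lt_def, h.h0]; omega

theorem le_last (h : Cfg2 X Y Ls P M i0 last) (j : Fin s) : j ≤ last := by
  have := h.hl
  have := j.2
  rw [Fin.le_def]; omega

theorem Mmem (h : Cfg2 X Y Ls P M i0 last) {q : P2 K} (hq : q ∈ Y last) :
    P ∈ (M q).points ∧ q ∈ (M q).points := h.hM q (h.ne_P h.lastpos hq)

theorem M_inj (h : Cfg2 X Y Ls P M i0 last) {q q' : P2 K} (hq : q ∈ Y last) (hq' : q' ∈ Y last)
    (e : M q = M q') : q = q' := by
  have h1 := h.Mmem hq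
  have h2 := h.Mmem hq'
  rw [← e] at h2
  refine pt_eq (L := M q) (L' := Ls last) ?_ h1.2 h2.2 (h.cfg.sub _ _ hq) (h.cfg.sub _ _ hq')
  intro e'
  rw [e'] at h1
  exact h.P_notMem h.lastpos h1.1

theorem thr_one (h : Cfg2 X Y Ls P M i0 last) {A : Finset (P2 K)} (hA : A ⊆ Y last) {p : P2 K}
    (hp : p ≠ P) : ∑ q ∈ A, ind (M q) p ≤ 1 := by
  refine sum_ind_le_one A M p fun j hj k hk hpj hpk => ?_
  exact h.M_inj (hA hj) (hA hk) (line_eq hp hpj (h.Mmem (hA hj)).1 hpk (h.Mmem (hA hk)).1)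

theorem full_meets (h : Cfg2 X Y Ls P M i0 last) {L : ProjLine K} (hL : P ∈ L.points)
    (hc : (on X L).card = s) {i : Fin s} (hi : i0 < i) : ∃ p ∈ Y i, p ∈ L.points := by
  by_cases hx : ∀ i, Ls i ≠ L
  · exact h.cfg.other_meet hx hc i
  · push Not at hx
    obtain ⟨j, rfl⟩ := hx
    have : j = i0 := by
      have h1 := h.cfg.le_of_on h.memP hL
      refine le_antisymm h1 ?_
      rw [Fin.le_def, h.h0]; omega
    subst this
    exact h.cfg.full_meet hc hi

/-- points of the last line joined to `P` by a full line -/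
noncomputable def QF (X : Finset (P2 K)) (Y : Fin s → Finset (P2 K)) (M : P2 K → ProjLine K)
    (last : Fin s) : Finset (P2 K) :=
  (Y last).filter fun q => (on X (M q)).card = s

theorem card_last (h : Cfg2 X Y Ls P M i0 last) : (Y last).card = s := h.cfg.last last h.hl

theorem card_le (h : Cfg2 X Y Ls P M i0 last) (i : Fin s) : (Y i).card ≤ i + 1 := by
  have := h.cfg.add_le i
  have := i.2
  omega

theorem on_last (h : Cfg2 X Y Ls P M i0 last) : extra X Y Ls last = ∅ := by
  rw [← Finset.card_eq_zero]
  have := h.cfg.extra_le last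
  have := h.hl
  omega

variable [Infinite K]

open Classical in
theorem III (h : Cfg2 X Y Ls P M i0 last) (m : ℕ) (hm : 1 ≤ m) :
    Reg X (fun p => (m : ℤ) - if p ∈ Y last then 1 else 0) ((m : ℤ) * s - 1) := by
  have hs2 : (2 : ℤ) ≤ s := by exact_mod_cast h.two
  induction m, hm using Nat.le_induction with
  | base =>
    refine Reg.round Ls (Finset.Iio last) ?_ (Reg.zero _ fun p hp => ?_)
    swap
    · obtain ⟨j, hj⟩ := (h.cfg.mem p).1 hp
      split_ifs with hl
      · have := sum_ind_nonneg (Finset.Iio last) Ls p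
        push_cast; linarith
      · have hjl : j < last := lt_of_le_of_ne (h.le_last j) (by rintro rfl; exact hl hj)
        have := sum_ind_pos (Finset.Iio last) Ls p (Finset.mem_Iio.2 hjl) (h.cfg.sub j p hj)
        push_cast; linarith
    intro i hi
    have hil := Finset.mem_Iio.1 hi
    change ∑ p ∈ on X (Ls i), _ ≤ _
    have hb := h.cfg.line_bound i (fun p => ((1 : ℕ) : ℤ) - (if p ∈ Y last then 1 else 0)
        - ∑ j ∈ Finset.Iio last with i < j, ind (Ls j) p) (fun _ => 0) 1 0 le_rfl
      (fun p hp => by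
        have h2 := sum_ind_nonneg ((Finset.Iio last).filter (i < ·)) Ls p
        split_ifs <;> push_cast <;> linarith)
      (fun p _ => by omega)
      (fun p hp => by
        obtain ⟨h1, j, hij, hj⟩ := h.cfg.mem_extra.1 hp
        split_ifs with hl
        · have h2 := sum_ind_nonneg ((Finset.Iio last).filter (i < ·)) Ls p
          push_cast; linarith
        · have hjl : j < last := lt_of_le_of_ne (h.le_last j) (by rintro rfl; exact hl hj)
          have := sum_ind_pos ((Finset.Iio last).filter (i < ·)) Ls p
            (Finset.mem_filter.2 ⟨Finset.mem_Iio.2 hjl, hij⟩) (h.cfg.sub j p hj)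
          push_cast; linarith)
    refine hb.trans ?_
    have g1 := h.card_le i
    have g2 : ((Finset.Iio last).filter (i < ·)) = Finset.Ioo i last := by
      ext j; simp [and_comm]
    rw [g2, Fin.card_Ioo]
    have g3 := h.hl
    have g4 : (i : ℕ) < last := hil
    simp only [Finset.sum_const_zero]
    zify at g1
    have g5 : (((last : ℕ) - (i : ℕ) - 1 : ℕ) : ℤ) = s - 2 - i := by omega
    rw [g5]
    push_cast
    linarith
  | succ m hm ih =>
    refine Reg.round Ls Finset.univ ?_ (ih.mono (fun p hp => ?_) ?_)
    swap
    · obtain ⟨j, hj⟩ := (h.cfg.mem p).1 hp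
      have := sum_ind_pos Finset.univ Ls p (Finset.mem_univ j) (h.cfg.sub j p hj)
      push_cast; linarith
    swap
    · simp only [Finset.card_univ, Fintype.card_fin]; push_cast; linarith
    intro i _
    change ∑ p ∈ on X (Ls i), _ ≤ _
    have e : (Finset.univ.filter (i < ·)) = Finset.Ioi i := by ext j; simp
    simp only [e]
    rw [card_Ioi_int i]
    have hm1 : (1 : ℤ) ≤ m := by exact_mod_cast hm
    have g1 := h.card_le i
    have g3 := h.hl
    by_cases hil : i = last
    · subst hil
      have hb := h.cfg.line_bound i (fun p => ((m + 1 : ℕ) : ℤ) - (if p ∈ Y i then 1 else 0)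
          - ∑ j ∈ Finset.Ioi i, ind (Ls j) p) (fun _ => 0) m 0 le_rfl
        (fun p hp => by
          have h2 := sum_ind_nonneg (Finset.Ioi i) Ls p
          rw [if_pos hp]; push_cast; linarith)
        (fun p _ => by omega)
        (fun p hp => by rw [h.on_last] at hp; simp at hp)
      refine hb.trans ?_
      rw [h.card_last]
      have g4 : ((i : ℕ) : ℤ) + 1 = s := by exact_mod_cast g3
      simp only [Finset.sum_const_zero]
      push_cast
      linarith
    · have hil' : i < last := lt_of_le_of_ne (h.le_last i) hil
      have hub : ∀ p ∈ extra X Y Ls i, ((m + 1 : ℕ) : ℤ) - (if p ∈ Y last then 1 else 0)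
          - ∑ j ∈ Finset.Ioi i, ind (Ls j) p ≤ m - (if p ∈ Y last then 1 else 0) := by
        intro p hp
        obtain ⟨h1, j, hij, hj⟩ := h.cfg.mem_extra.1 hp
        have := sum_ind_pos (Finset.Ioi i) Ls p (Finset.mem_Ioi.2 hij) (h.cfg.sub j p hj)
        push_cast; linarith
      have ge := h.cfg.extra_le_int i
      have gd : ((Y i).card : ℤ) ≤ i + 1 := by exact_mod_cast g1
      have hbY : ∑ p ∈ Y i, max 0 (((m + 1 : ℕ) : ℤ) - (if p ∈ Y last then 1 else 0)
          - ∑ j ∈ Finset.Ioi i, ind (Ls j) p) ≤ (i + 1) * (m + 1) := by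
        have : ∑ p ∈ Y i, max 0 (((m + 1 : ℕ) : ℤ) - (if p ∈ Y last then 1 else 0)
          - ∑ j ∈ Finset.Ioi i, ind (Ls j) p) ≤ (Y i).card • ((m : ℤ) + 1) := by
          refine Finset.sum_le_card_nsmul _ _ _ fun p hp => max_le (by omega) ?_
          have h2 := sum_ind_nonneg (Finset.Ioi i) Ls p
          split_ifs <;> push_cast <;> linarith
        rw [nsmul_eq_mul] at this
        refine this.trans (mul_le_mul_of_nonneg_right gd (by omega))
      have hbE : ∑ p ∈ extra X Y Ls i, max 0 (((m + 1 : ℕ) : ℤ) - (if p ∈ Y last then 1 else 0)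
          - ∑ j ∈ Finset.Ioi i, ind (Ls j) p) ≤ (s - 1 - i) * m - 1 := by
        have hb1 : ∑ p ∈ extra X Y Ls i, max 0 (((m + 1 : ℕ) : ℤ) - (if p ∈ Y last then 1 else 0)
          - ∑ j ∈ Finset.Ioi i, ind (Ls j) p) ≤
            ∑ p ∈ extra X Y Ls i, ((m : ℤ) - (if p ∈ Y last then 1 else 0)) := by
          refine Finset.sum_le_sum fun p hp => max_le ?_ (hub p hp)
          split_ifs <;> linarith
        refine hb1.trans ?_
        rw [Finset.sum_sub_distrib, Finset.sum_const, nsmul_eq_mul]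
        by_cases hmeet : ∃ p ∈ Y last, p ∈ (Ls i).points
        · obtain ⟨p, hp, hpi⟩ := hmeet
          have hpE : p ∈ extra X Y Ls i := h.cfg.mem_extra.2 ⟨hpi, last, hil', hp⟩
          have : (if p ∈ Y last then (1 : ℤ) else 0) ≤
              ∑ p ∈ extra X Y Ls i, (if p ∈ Y last then (1 : ℤ) else 0) :=
            Finset.single_le_sum (f := fun p => if p ∈ Y last then (1 : ℤ) else 0)
              (fun q _ => by beta_reduce; split_ifs <;> simp) hpE
          rw [if_pos hp] at this
          have h5 := mul_le_mul_of_nonneg_right ge (by omega : (0 : ℤ) ≤ m)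
          linarith
        · push Not at hmeet
          have h1 := h.cfg.extra_lt hil' hmeet
          have h2 : ((extra X Y Ls i).card : ℤ) ≤ s - 1 - i - 1 := by omega
          have h5 := mul_le_mul_of_nonneg_right h2 (by omega : (0 : ℤ) ≤ m)
          have : 0 ≤ ∑ p ∈ extra X Y Ls i, (if p ∈ Y last then (1 : ℤ) else 0) :=
            Finset.sum_nonneg (fun q _ => by split_ifs <;> simp)
          linarith
      rw [h.cfg.on_eq, Finset.sum_union (h.cfg.disj i)]
      push_cast at hbY hbE ⊢
      linarith

end Cfg2


namespace Cfg2

open Cfg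

variable {K : Type} [Field K] [Infinite K] {s : ℕ} {X : Finset (P2 K)}
    {Y : Fin s → Finset (P2 K)}
    {Ls : Fin s → ProjLine K} {P : P2 K} {M : P2 K → ProjLine K} {i0 last : Fin s}

/-- the statement of the intermediate steps -/
def Stm (X : Finset (P2 K)) (Y : Fin s → Finset (P2 K)) (Ls : Fin s → ProjLine K)
    (M : P2 K → ProjLine K) (i0 last : Fin s) (m r a : ℕ) : Prop :=
  ∀ A : Finset (P2 K), A ⊆ Y last → QF X Y M last ⊆ A →
    A.card = max a (QF X Y M last).card →
    Reg X (fun p => (m : ℤ) - r * ∑ j ∈ Finset.Ioi i0, ind (Ls j) p - ∑ q ∈ A, ind (M q) p)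
      ((m : ℤ) * s - 1 - (s - 1) * r - A.card)

theorem cardJ (h : Cfg2 X Y Ls P M i0 last) : ((Finset.Ioi i0).card : ℤ) = s - 1 := by
  rw [card_Ioi_int, h.h0]; simp

theorem stm_s (h : Cfg2 X Y Ls P M i0 last) (m : ℕ) (hm : s + 1 ≤ m) :
    Stm X Y Ls M i0 last m s s := by
  classical
  intro A hA hQ hc
  have hcl := h.card_last
  have hQs : (QF X Y M last).card ≤ s :=
    (Finset.card_le_card (hQ.trans hA)).trans hcl.le
  have hAs : A.card = s := by omega
  have hAe : A = Y last := Finset.eq_of_subset_of_card_le hA (by omega)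
  have h3 := h.III (m - s) (by omega)
  have e : ((m - s : ℕ) : ℤ) = m - s := by omega
  rw [e] at h3
  refine h3.mono (fun p hp => ?_) ?_
  · have hs0 : (0 : ℤ) ≤ s := by omega
    by_cases hpP : p = P
    · subst hpP
      rw [if_neg (fun hl => h.ne_P h.lastpos hl rfl)]
      have h1 := sum_ind_nonneg (Finset.Ioi i0) Ls p
      have h2 : (A.card : ℤ) ≤ ∑ q ∈ A, ind (M q) p := by
        rw [Finset.card_eq_sum_ones]; push_cast
        refine Finset.sum_le_sum fun q hq => ?_
        rw [ind_of_mem (h.Mmem (hA hq)).1]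
      rw [hAs] at h2
      have := mul_nonneg hs0 h1
      linarith
    · obtain ⟨j, hj0, hj⟩ := h.exJ hp hpP
      have h1 := sum_ind_pos (Finset.Ioi i0) Ls p (Finset.mem_Ioi.2 hj0) (h.cfg.sub j p hj)
      have h4 := mul_le_mul_of_nonneg_left h1 hs0
      split_ifs with hl
      · have h2 := sum_ind_pos A M p (hAe ▸ hl) (h.Mmem hl).2
        linarith
      · have h2 := sum_ind_nonneg A M p
        linarith
  · rw [hAs]; linarith

open Classical in
/-- removing one line through `P` -/
theorem stm_pred (h : Cfg2 X Y Ls P M i0 last) (m r : ℕ) (hm : s + 1 ≤ m) (hr1 : 1 ≤ r)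
    (hrs : r ≤ s) (hst : Stm X Y Ls M i0 last m r r) : Stm X Y Ls M i0 last m r (r - 1) := by
  intro A hA hQ hc
  by_cases ha : r ≤ (QF X Y M last).card
  · exact hst A hA hQ (by omega)
  have hAr : A.card = r - 1 := by omega
  have hcl := h.card_last
  obtain ⟨q, hq, hqA⟩ : ∃ q ∈ Y last, q ∉ A := by
    by_contra hcon
    push Not at hcon
    have := Finset.card_le_card hcon
    omega
  have hins : (insert q A).card = A.card + 1 := Finset.card_insert_of_notMem hqA
  have h1 := hst (insert q A) (Finset.insert_subset hq hA)
    (hQ.trans (Finset.subset_insert _ _)) (by omega)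
  rw [hins] at h1
  refine Reg.step (M q) ?_ (h1.mono (fun p _ => ?_) ?_)
  swap
  · rw [Finset.sum_insert hqA]; linarith
  swap
  · push_cast; linarith
  change ∑ p ∈ on X (M q), _ ≤ _
  have hPX : P ∈ X := h.cfg.subX h.memP
  have hPon : P ∈ on X (M q) := mem_on.2 ⟨hPX, (h.Mmem hq).1⟩
  have hnf : (on X (M q)).card ≤ s - 1 := by
    have h1 := h.cfg.le_D (by have := h.two; omega) (M q)
    have h2 : (on X (M q)).card ≠ s := by
      intro e
      exact hqA (hQ (Finset.mem_filter.2 ⟨hq, e⟩))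
    omega
  rw [← Finset.add_sum_erase _ _ hPon]
  have hc2 := Finset.card_erase_add_one hPon
  have hAz : (A.card : ℤ) = r - 1 := by omega
  have hr0 : (0 : ℤ) ≤ r := by omega
  have hmr : (1 : ℤ) ≤ m - r := by omega
  have b1 : max 0 ((m : ℤ) - r * ∑ j ∈ Finset.Ioi i0, ind (Ls j) P - ∑ q ∈ A, ind (M q) P) ≤
      m - r + 1 := by
    refine max_le (by linarith) ?_
    have h1 := sum_ind_nonneg (Finset.Ioi i0) Ls P
    have h2 : (A.card : ℤ) ≤ ∑ q ∈ A, ind (M q) P := by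
      rw [Finset.card_eq_sum_ones]; push_cast
      refine Finset.sum_le_sum fun q hq => ?_
      rw [ind_of_mem (h.Mmem (hA hq)).1]
    have := mul_nonneg hr0 h1
    linarith
  have b2 : ∑ p ∈ (on X (M q)).erase P,
      max 0 ((m : ℤ) - r * ∑ j ∈ Finset.Ioi i0, ind (Ls j) p - ∑ q ∈ A, ind (M q) p) ≤
      ((on X (M q)).erase P).card • ((m : ℤ) - r) := by
    refine Finset.sum_le_card_nsmul _ _ _ fun p hp => max_le (by linarith) ?_
    obtain ⟨hpP, hpo⟩ := Finset.mem_erase.1 hp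
    obtain ⟨j, hj0, hj⟩ := h.exJ (mem_on.1 hpo).1 hpP
    have h1 := sum_ind_pos (Finset.Ioi i0) Ls p (Finset.mem_Ioi.2 hj0) (h.cfg.sub j p hj)
    have h4 := mul_le_mul_of_nonneg_left h1 hr0
    have h2 := sum_ind_nonneg A M p
    linarith
  rw [nsmul_eq_mul] at b2
  have b3 : ((((on X (M q)).erase P).card : ℕ) : ℤ) ≤ s - 2 := by
    have := h.two
    omega
  have b4 := mul_le_mul_of_nonneg_right b3 (by linarith : (0 : ℤ) ≤ m - r)
  rw [hAz]
  refine (add_le_add b1 (b2.trans b4)).trans ?_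
  linarith

open Classical in
theorem stm_round (h : Cfg2 X Y Ls P M i0 last) (m r : ℕ) (hm : s + 1 ≤ m) (hr1 : 1 ≤ r)
    (hrs : r < s) (hst : Stm X Y Ls M i0 last m (r + 1) r) : Stm X Y Ls M i0 last m r r := by
  intro A hA hQ hc
  have h1 := hst A hA hQ hc
  have hJ := h.cardJ
  refine Reg.round Ls (Finset.Ioi i0) ?_ (h1.mono (fun p _ => ?_) ?_)
  swap
  · push_cast; linarith
  swap
  · rw [hJ]; push_cast; linarith
  intro i hi
  have hi0 := Finset.mem_Ioi.1 hi
  change ∑ p ∈ on X (Ls i), _ ≤ _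
  have e : ((Finset.Ioi i0).filter (i < ·)) = Finset.Ioi i := by
    ext j
    simp only [Finset.mem_filter, Finset.mem_Ioi]
    exact ⟨fun h => h.2, fun h => ⟨hi0.trans h, h⟩⟩
  simp only [e]
  rw [card_Ioi_int i]
  have hr0 : (0 : ℤ) ≤ r := by omega
  have hr1' : (1 : ℤ) ≤ r := by omega
  have hmr : (2 : ℤ) ≤ m - r := by omega
  have hs2 := h.two
  set Q := QF X Y M last with hQdef
  -- common: choose `B`, the part of `A` used for the estimate
  have main : ∀ B ⊆ A, (∀ q ∈ B, ∃ p ∈ Y i, p ∈ (M q).points) →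
      ∑ p ∈ on X (Ls i), max 0 ((m : ℤ) - r * ∑ j ∈ Finset.Ioi i0, ind (Ls j) p
        - ∑ q ∈ A, ind (M q) p - ∑ j ∈ Finset.Ioi i, ind (Ls j) p) ≤
      (Y i).card * ((m : ℤ) - r) - B.card +
        (extra X Y Ls i).card * max 0 ((m : ℤ) - 2 * r - 1) := by
    intro B hBA hB
    have hb := h.cfg.line_bound i (fun p => (m : ℤ) - r * ∑ j ∈ Finset.Ioi i0, ind (Ls j) p
        - ∑ q ∈ A, ind (M q) p - ∑ j ∈ Finset.Ioi i, ind (Ls j) p)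
      (fun p => ∑ q ∈ B, ind (M q) p) (m - r) (max 0 ((m : ℤ) - 2 * r - 1)) (le_max_left _ _)
      (fun p hp => by
        have h1 := sum_ind_pos (Finset.Ioi i0) Ls p hi (h.cfg.sub i p hp)
        have h2 := sum_ind_nonneg (Finset.Ioi i) Ls p
        have h3 := mul_le_mul_of_nonneg_left h1 hr0
        have h4 := sum_ind_mono hBA M p
        linarith)
      (fun p hp => by
        have := h.thr_one (hBA.trans hA) (h.ne_P hi0 hp)
        linarith)
      (fun p hp => by
        obtain ⟨h1, j, hij, hj⟩ := h.cfg.mem_extra.1 hp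
        have h2 := sum_ind_two (Finset.Ioi i0) Ls p hi (Finset.mem_Ioi.2 (hi0.trans hij)) hij.ne h1
          (h.cfg.sub j p hj)
        have h3 := sum_ind_pos (Finset.Ioi i) Ls p (Finset.mem_Ioi.2 hij) (h.cfg.sub j p hj)
        have h4 := mul_le_mul_of_nonneg_left h2 hr0
        have h5 := sum_ind_nonneg A M p
        refine le_max_of_le_right ?_
        linarith)
    have g := sum_ind_ge (Y i) B M hB
    linarith
  have hl := h.hl
  by_cases hil : i = last
  · subst hil
    have hb := main A (Finset.Subset.refl _) (fun q hq => ⟨q, hA hq, (h.Mmem (hA hq)).2⟩)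
    rw [h.on_last, h.card_last] at hb
    simp only [Finset.card_empty] at hb
    have g4 : ((i : ℕ) : ℤ) + 1 = s := by exact_mod_cast hl
    push_cast at hb
    linarith
  · have hil' : i < last := lt_of_le_of_ne (h.le_last i) hil
    have hb := main Q hQ (fun q hq => by
      obtain ⟨h1, h2⟩ := Finset.mem_filter.1 hq
      exact h.full_meets (h.Mmem h1).1 h2 hi0)
    have g1 := h.cfg.add_le_int i
    have g2 := h.cfg.extra_le_int i
    have hk : (1 : ℤ) ≤ s - 1 - i := by
      have : (i : ℕ) < last := hil'
      omega
    set k : ℤ := s - 1 - i with hkdef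
    set dd : ℤ := ((Y i).card : ℤ)
    set ee : ℤ := ((extra X Y Ls i).card : ℤ)
    set b : ℤ := max 0 ((m : ℤ) - 2 * r - 1) with hbdef
    have h1 : dd * (m - r) ≤ (s - k) * (m - r) :=
      mul_le_mul_of_nonneg_right (by linarith) (by linarith)
    have hb0 : 0 ≤ b := le_max_left _ _
    have h2 : ee * b ≤ k * b := mul_le_mul_of_nonneg_right g2 hb0
    have hb1 : b ≤ m - r - 2 := by rw [hbdef]; exact max_le (by linarith) (by linarith)
    have h3 : k * b ≤ k * (m - r - 2) := mul_le_mul_of_nonneg_left hb1 (by linarith)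
    have hAc : (A.card : ℤ) ≤ r - 1 + Q.card + 1 - 0 ∧ (A.card : ℤ) ≤ r + Q.card := by
      constructor <;> omega
    nlinarith
  
theorem stm_all (h : Cfg2 X Y Ls P M i0 last) (m : ℕ) (hm : s + 1 ≤ m) (r : ℕ) (hr1 : 1 ≤ r)
    (hrs : r ≤ s) : Stm X Y Ls M i0 last m r r := by
  induction hrs using Nat.decreasingInduction with
  | self => exact h.stm_s m hm
  | of_succ r hrs ih =>
    exact h.stm_round m r hm hr1 hrs (h.stm_pred m (r + 1) hm (by omega) (by omega) (ih (by omega)))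

open Classical in
theorem mainII (h : Cfg2 X Y Ls P M i0 last) (m : ℕ) (hm : s + 1 ≤ m) :
    deltaHilb (fatIdeal (X : Set (P2 K)) m) ((m : ℤ) * s - 1) =
      ({L : ProjLine K | ((X : Set (P2 K)) ∩ L.points).ncard = s}.ncard : ℤ) := by
  have hs2 := h.two
  set Fi := (Finset.Ioi i0).filter fun j => (on X (Ls j)).card = s with hFi
  set Q := QF X Y M last with hQ
  have hQY : Q ⊆ Y last := Finset.filter_subset _ _
  have hQc : (Q.image M).card = Q.card := Finset.card_image_of_injOn
    (fun a ha b hb e => h.M_inj (hQY ha) (hQY hb) e)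
  have hFc : (Fi.image Ls).card = Fi.card := Finset.card_image_of_injective _ h.cfg.inj
  have hdisj : Disjoint (Fi.image Ls) (Q.image M) := by
    rw [Finset.disjoint_left]
    intro L h1 h2
    obtain ⟨j, hj, rfl⟩ := Finset.mem_image.1 h1
    obtain ⟨q, hq, e⟩ := Finset.mem_image.1 h2
    have hP := (h.Mmem (hQY hq)).1
    rw [e] at hP
    exact h.P_notMem (Finset.mem_Ioi.1 (Finset.mem_filter.1 hj).1) hP
  have hcard : (Fi.image Ls ∪ Q.image M).card = Fi.card + Q.card := by
    rw [Finset.card_union_of_disjoint hdisj, hQc, hFc]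
  have hFs : Fi.card ≤ s - 1 := by
    refine (Finset.card_filter_le _ _).trans ?_
    have := h.cardJ
    omega
  have hQs : Q.card ≤ s := (Finset.card_le_card hQY).trans h.card_last.le
  have hmD : (s + 1) * s ≤ m * s := Nat.mul_le_mul_right _ hm
  have hss : 2 * s ≤ s * s := Nat.mul_le_mul_right _ hs2
  have hexp : (s + 1) * s = s * s + s := by ring
  refine main_of_reg X m s (Fi.image Ls ∪ Q.image M) ?_ (by omega) (by omega) ?_
  · intro L
    rw [Finset.mem_union, Finset.mem_image, Finset.mem_image]
    constructor
    · rintro (⟨i, hi, rfl⟩ | ⟨q, hq, rfl⟩)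
      · exact (Finset.mem_filter.1 hi).2
      · exact (Finset.mem_filter.1 hq).2
    · intro hL
      change (on X L).card = s at hL
      have hPcase : P ∈ L.points → ∃ a ∈ Q, M a = L := by
        intro hP
        obtain ⟨q, hq, hqL⟩ := h.full_meets hP hL h.lastpos
        have e : M q = L := line_eq (h.ne_P h.lastpos hq) (h.Mmem hq).2 (h.Mmem hq).1 hqL hP
        exact ⟨q, Finset.mem_filter.2 ⟨hq, by rw [e]; exact hL⟩, e⟩
      by_cases hc : ∀ i, Ls i ≠ L
      · right
        obtain ⟨p, hp, hpL⟩ := h.cfg.other_meet hc hL i0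
        rw [h.hP, Finset.mem_singleton] at hp
        subst hp
        exact hPcase hpL
      · push Not at hc
        obtain ⟨i, rfl⟩ := hc
        by_cases hi : i = i0
        · right
          subst hi
          exact hPcase (h.cfg.sub _ _ h.memP)
        · left
          refine ⟨i, Finset.mem_filter.2 ⟨Finset.mem_Ioi.2 ?_, hL⟩, rfl⟩
          rw [Fin.lt_def, h.h0, Nat.pos_iff_ne_zero]
          intro e
          exact hi (Fin.ext (by rw [e, h.h0]))
  · rw [hcard]
    have h1 := h.stm_pred m 1 hm le_rfl (by omega) (h.stm_all m hm 1 le_rfl (by omega))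
      Q hQY (Finset.Subset.refl _) (by simp [hQ])
    have h0 := h.cfg.round0 m (by omega) (Finset.Ioi i0)
      (fun i hi j hij => Finset.mem_Ioi.2 ((Finset.mem_Ioi.1 hi).trans hij))
      Q M (fun q hq i hi => h.full_meets (h.Mmem (hQY hq)).1 (Finset.mem_filter.1 hq).2
        (Finset.mem_Ioi.1 hi))
      (fun i hi p hp => h.thr_one hQY (h.ne_P (Finset.mem_Ioi.1 hi) hp))
      (h1.mono (fun p _ => by push_cast; linarith)
        (by rw [h.cardJ]; push_cast; linarith))
    refine h0.mono (fun p _ => ?_) ?_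
    · rw [Finset.sum_union hdisj, Finset.sum_image (fun _ _ _ _ e => h.cfg.inj e),
        Finset.sum_image (fun a ha b hb e => h.M_inj (hQY ha) (hQY hb) e)]
      linarith
    · push_cast; linarith

end Cfg2

/-- **Theorem (main theorem).** Let `X ⊆ P²` be a k-configuration of type
`(d₁,…,d_s) ≠ (1)`. Then there is an `m₀` such that for all `m ≥ m₀`,
`ΔH_{mX}(m·d_s − 1)` equals the number of lines containing exactly `d_s` points
of `X`; moreover one can take `m₀ = 2` if `d_s > s` and `m₀ = s + 1` if `d_s = s`. -/
theorem mainTheorem {K : Type} [Field K] [IsAlgClosed K] {s : ℕ} (hs : 0 < s)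
    (X : Set (P2 K)) (d : Fin s → ℕ) (Xs : Fin s → Set (P2 K)) (Ls : Fin s → ProjLine K)
    (hX : IsKConfig X d Xs Ls)
    (ds : ℕ) (hds : ds = d ⟨s - 1, Nat.sub_lt hs Nat.one_pos⟩)
    (hne : ¬ (s = 1 ∧ ds = 1)) :
    (∃ m₀ : ℕ, ∀ m : ℕ, m₀ ≤ m →
      deltaHilb (fatIdeal X m) ((m : ℤ) * ds - 1) =
        ({L : ProjLine K | (X ∩ L.points).ncard = ds}.ncard : ℤ)) ∧
    (s < ds → ∀ m : ℕ, 2 ≤ m →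
      deltaHilb (fatIdeal X m) ((m : ℤ) * ds - 1) =
        ({L : ProjLine K | (X ∩ L.points).ncard = ds}.ncard : ℤ)) ∧
    (ds = s → ∀ m : ℕ, s + 1 ≤ m →
      deltaHilb (fatIdeal X m) ((m : ℤ) * ds - 1) =
        ({L : ProjLine K | (X ∩ L.points).ncard = ds}.ncard : ℤ)) := by
  have hfi : ∀ i, (Xs i).Finite := fun i =>
    Set.finite_of_ncard_pos (by rw [hX.card_eq]; exact hX.one_le i)
  have hfX : X.Finite := by rw [hX.union_eq]; exact Set.finite_iUnion hfi
  have hcard : ∀ i, ((hfi i).toFinset).card = d i := fun i => by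
    rw [← hX.card_eq, Set.ncard_eq_toFinset_card _ (hfi i)]
  have hcfg : Cfg hfX.toFinset (fun i => (hfi i).toFinset) Ls ds :=
    { mem := fun p => by
        rw [Set.Finite.mem_toFinset]
        conv_lhs => rw [hX.union_eq]
        simp
      sub := fun i p hp => hX.subset_line i ((hfi i).mem_toFinset.1 hp)
      nm := fun i j hij p hp => hX.not_mem i j hij p ((hfi j).mem_toFinset.1 hp)
      one := fun i => by rw [hcard]; exact hX.one_le i
      mono := fun i j hij => by
        change ((hfi i).toFinset).card < ((hfi j).toFinset).card
        rw [hcard, hcard]; exact hX.strictMono hij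
      inj := hX.lines_distinct
      last := fun i hi => by
        rw [hcard, hds]
        congr 1
        apply Fin.ext
        change (i : ℕ) = s - 1
        omega }
  have : Infinite K := IsAlgClosed.instInfinite
  have h1 : s < ds → ∀ m : ℕ, 2 ≤ m →
      deltaHilb (fatIdeal X m) ((m : ℤ) * ds - 1) =
        ({L : ProjLine K | (X ∩ L.points).ncard = ds}.ncard : ℤ) := by
    intro hlt m hm
    have h := hcfg.mainI hs hlt m hm
    rwa [hfX.coe_toFinset] at h
  have h2 : ds = s → ∀ m : ℕ, s + 1 ≤ m →
      deltaHilb (fatIdeal X m) ((m : ℤ) * ds - 1) =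
        ({L : ProjLine K | (X ∩ L.points).ncard = ds}.ncard : ℤ) := by
    intro he m hm
    have hs2 : 2 ≤ s := by
      by_contra hc
      exact hne ⟨by omega, by omega⟩
    have hc1 : ((hfi ⟨0, hs⟩).toFinset).card = 1 := by
      have a := hcfg.add_le ⟨0, hs⟩
      have b := hcfg.one ⟨0, hs⟩
      simp only at a b
      omega
    obtain ⟨P, hP⟩ := Finset.card_eq_one.1 hc1
    have hM : ∀ q : P2 K, ∃ L : ProjLine K, q ≠ P → P ∈ L.points ∧ q ∈ L.points := by
      intro q
      by_cases hq : q = P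
      · exact ⟨Ls ⟨0, hs⟩, fun h => absurd hq h⟩
      · obtain ⟨L, hL⟩ := exists_line P q (Ne.symm hq)
        exact ⟨L, fun _ => hL⟩
    choose M hM using hM
    have h2 : Cfg2 hfX.toFinset (fun i => (hfi i).toFinset) Ls P M ⟨0, hs⟩
        ⟨s - 1, Nat.sub_lt hs Nat.one_pos⟩ :=
      { cfg := he ▸ hcfg
        two := hs2
        h0 := rfl
        hl := by change s - 1 + 1 = s; omega
        hP := hP
        hM := hM }
    have h := h2.mainII m hm
    rw [hfX.coe_toFinset] at h
    rw [he]
    exact h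
  refine ⟨?_, h1, h2⟩
  rcases (hcfg.s_le hs).lt_or_eq with hlt | he
  · exact ⟨2, h1 hlt⟩
  · exact ⟨s + 1, h2 he.symm⟩
end

section
/- Let X ⊆ P² be a k-configuration of type (d₁,…,d_s). Then for any line L in P², the number of points of X lying on L is at most d_s, i.e. |L ∩ X| ≤ d_s. -/
theorem aux_lines_inter {K : Type} [Field K] {L M : ProjLine K} (h : L ≠ M) :
    (L.points ∩ M.points).Subsingleton := by
  have hne : L.toSubmodule ≠ M.toSubmodule := by
    intro e
    apply h
    cases L; cases M; simp_all
  have hlt : Module.finrank K ↥(L.toSubmodule ⊓ M.toSubmodule) < 2 := by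
    by_contra! hge
    apply hne
    have h1 : L.toSubmodule ⊓ M.toSubmodule = L.toSubmodule :=
      Submodule.eq_of_le_of_finrank_le inf_le_left (by rw [L.finrank_eq_two]; exact hge)
    have h2 : L.toSubmodule ⊓ M.toSubmodule = M.toSubmodule :=
      Submodule.eq_of_le_of_finrank_le inf_le_right (by rw [M.finrank_eq_two]; exact hge)
    rw [← h1, h2]
  have key : ∀ p ∈ L.points ∩ M.points, p.submodule = L.toSubmodule ⊓ M.toSubmodule := by
    intro p hp
    apply Submodule.eq_of_le_of_finrank_le (le_inf hp.1 hp.2)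
    rw [Projectivization.finrank_submodule]
    omega
  intro p hp q hq
  exact Projectivization.submodule_injective ((key p hp).trans (key q hq).symm)

theorem aux_strictMono {s : ℕ} {d : Fin s → ℕ} (hd : StrictMono d) (i : Fin s) :
    ∀ (n : ℕ) (h : i.val + n < s), d i + n ≤ d ⟨i.val + n, h⟩ := by
  intro n
  induction n with
  | zero => intro h; simp
  | succ n ih =>
    intro h
    have h1 := ih (by omega)
    have h2 : d ⟨i.val + n, by omega⟩ < d ⟨i.val + (n + 1), h⟩ := hd (by simp [Fin.lt_def])
    omega

theorem aux_sum {s : ℕ} {α : Type} (A : Fin s → Set α) (F : Finset (Fin s))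
    (hA : ∀ i ∈ F, (A i).Subsingleton) : (⋃ i ∈ F, A i).ncard ≤ F.card := by
  refine (Finset.set_ncard_biUnion_le F A).trans ?_
  calc _ ≤ ∑ i ∈ F, 1 := Finset.sum_le_sum (fun i hi => by
          have := hA i hi
          exact (Set.ncard_le_one this.finite).2 (fun a ha b hb => this ha hb))
    _ = F.card := by simp

/-- **Lemma (bounds), part (iii).** If `X` is a k-configuration of type
`(d₁,…,d_s)`, then any line of `P²` contains at most `d_s` points of `X`. -/
theorem kconfig_line_le {K : Type} [Field K] [IsAlgClosed K] {s : ℕ} (hs : 0 < s)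
    (X : Set (P2 K)) (d : Fin s → ℕ) (Xs : Fin s → Set (P2 K)) (Ls : Fin s → ProjLine K)
    (hX : IsKConfig X d Xs Ls)
    (ds : ℕ) (hds : ds = d ⟨s - 1, Nat.sub_lt hs Nat.one_pos⟩) :
    ∀ L : ProjLine K, (X ∩ L.points).ncard ≤ ds := by
  intro L
  have sub : ∀ j, L ≠ Ls j → (Xs j ∩ L.points).Subsingleton := by
    intro j hj p hp q hq
    exact aux_lines_inter hj ⟨hp.2, hX.subset_line j hp.1⟩ ⟨hq.2, hX.subset_line j hq.1⟩
  have hfin : ∀ j, (Xs j).Finite := fun j => Set.finite_of_ncard_pos (by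
    rw [hX.card_eq]; exact hX.one_le j)
  by_cases hL : ∃ i, Ls i = L
  · obtain ⟨i, rfl⟩ := hL
    have hsub : X ∩ (Ls i).points ⊆
        Xs i ∪ ⋃ j ∈ Finset.Ioi i, (Xs j ∩ (Ls i).points) := by
      rintro p ⟨hp, hpi⟩
      rw [hX.union_eq] at hp
      obtain ⟨j, hj⟩ := Set.mem_iUnion.1 hp
      rcases lt_trichotomy j i with h | h | h
      · exact absurd hpi (hX.not_mem i j h p hj)
      · subst h; exact Or.inl hj
      · right
        simp only [Set.mem_iUnion]
        exact ⟨j, by simpa using h, hj, hpi⟩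
    have hf : (Xs i ∪ ⋃ j ∈ Finset.Ioi i, (Xs j ∩ (Ls i).points)).Finite :=
      (hfin i).union ((Finset.Ioi i).finite_toSet.biUnion
        (fun j _ => (hfin j).subset Set.inter_subset_left))
    have h1 := Set.ncard_le_ncard hsub hf
    have h2 := Set.ncard_union_le (Xs i) (⋃ j ∈ Finset.Ioi i, (Xs j ∩ (Ls i).points))
    have h3 := aux_sum (fun j => Xs j ∩ (Ls i).points) (Finset.Ioi i) (by
      intro j hj
      apply sub
      intro e
      have := hX.lines_distinct e
      subst this
      simp at hj)
    rw [hX.card_eq] at h2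
    rw [Fin.card_Ioi] at h3
    have hi := i.isLt
    have h4 := aux_strictMono hX.strictMono i (s - 1 - i.val) (by omega)
    have h5 : (⟨i.val + (s - 1 - i.val), by omega⟩ : Fin s) =
        ⟨s - 1, Nat.sub_lt hs Nat.one_pos⟩ := by
      apply Fin.ext; simp only; omega
    rw [h5] at h4
    omega
  · push Not at hL
    have hsub : X ∩ L.points ⊆ ⋃ j ∈ (Finset.univ : Finset (Fin s)), (Xs j ∩ L.points) := by
      rintro p ⟨hp, hpi⟩
      rw [hX.union_eq] at hp
      obtain ⟨j, hj⟩ := Set.mem_iUnion.1 hp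
      simp only [Set.mem_iUnion]
      exact ⟨j, Finset.mem_univ j, hj, hpi⟩
    have hf : (⋃ j ∈ (Finset.univ : Finset (Fin s)), (Xs j ∩ L.points)).Finite :=
      ((Finset.univ : Finset (Fin s)).finite_toSet.biUnion
        (fun j _ => (hfin j).subset Set.inter_subset_left))
    have h1 := Set.ncard_le_ncard hsub hf
    have h3 := aux_sum (fun j => Xs j ∩ L.points) Finset.univ
      (fun j _ => sub j (fun e => hL j e.symm))
    rw [Finset.card_univ, Fintype.card_fin] at h3
    have h4 := aux_strictMono hX.strictMono ⟨0, hs⟩ (s - 1) (by simp only; omega)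
    have h0 := hX.one_le ⟨0, hs⟩
    simp only [Nat.zero_add] at h4
    omega
end

section
/- Let X ⊆ P² be a k-configuration of type (d₁,…,d_s) defined using lines L₁,…,L_s, and suppose d_s > s. If L is any line in P² with |L ∩ X| = d_s, then L ∈ {L₁,…,L_s}. -/
/-- Two distinct lines meet in at most one point. -/
theorem points_eq_of_mem_two_lines {K : Type} [Field K] {L M : ProjLine K} (h : L ≠ M)
    {p q : P2 K} (hpL : p ∈ L.points) (hpM : p ∈ M.points) (hqL : q ∈ L.points)
    (hqM : q ∈ M.points) : p = q := by
  have hlt : Module.finrank K ↥(L.toSubmodule ⊓ M.toSubmodule) < 2 := by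
    by_contra hge
    have h1 : L.toSubmodule ⊓ M.toSubmodule = L.toSubmodule :=
      Submodule.eq_of_le_of_finrank_le inf_le_left (by rw [L.finrank_eq_two]; omega)
    have h2 : L.toSubmodule ⊓ M.toSubmodule = M.toSubmodule :=
      Submodule.eq_of_le_of_finrank_le inf_le_right (by rw [M.finrank_eq_two]; omega)
    apply h
    cases L
    cases M
    simp only [ProjLine.mk.injEq]
    exact h1.symm.trans h2
  have key : ∀ r : P2 K, r ∈ L.points → r ∈ M.points →
      r.submodule = L.toSubmodule ⊓ M.toSubmodule := fun r h1 h2 =>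
    Submodule.eq_of_le_of_finrank_le (le_inf h1 h2) (by
      rw [Projectivization.finrank_submodule]; omega)
  exact Projectivization.submodule_injective ((key p hpL hpM).trans (key q hqL hqM).symm)

/-- **Lemma (necessary conditions), part (i).** If `X` is a k-configuration of
type `(d₁,…,d_s)` with `d_s > s`, then any line containing exactly `d_s` points
of `X` is one of the defining lines `L₁,…,L_s`. -/
theorem kconfig_line_mem {K : Type} [Field K] [IsAlgClosed K] {s : ℕ} (hs : 0 < s)
    (X : Set (P2 K)) (d : Fin s → ℕ) (Xs : Fin s → Set (P2 K)) (Ls : Fin s → ProjLine K)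
    (hX : IsKConfig X d Xs Ls)
    (ds : ℕ) (hds : ds = d ⟨s - 1, Nat.sub_lt hs Nat.one_pos⟩)
    (hgt : s < ds) :
    ∀ L : ProjLine K, (X ∩ L.points).ncard = ds → ∃ i : Fin s, L = Ls i := by
  intro L hL
  by_contra! hne
  have hone : ∀ i, (Xs i ∩ L.points).ncard ≤ 1 := fun i => by
    have hsub : (Xs i ∩ L.points).Subsingleton := fun p hp q hq =>
      points_eq_of_mem_two_lines (hne i) hp.2 (hX.subset_line i hp.1) hq.2
        (hX.subset_line i hq.1)
    exact (Set.ncard_le_one hsub.finite).2 fun a ha b hb => hsub ha hb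
  have hU : X ∩ L.points = ⋃ i, (Xs i ∩ L.points) := by
    rw [hX.union_eq, Set.iUnion_inter]
  have hle : (X ∩ L.points).ncard ≤ ∑ i, (Xs i ∩ L.points).ncard := by
    rw [hU]
    exact Set.ncard_iUnion_le_of_fintype _
  have hle2 : ∑ i, (Xs i ∩ L.points).ncard ≤ ∑ _i : Fin s, 1 :=
    Finset.sum_le_sum fun i _ => hone i
  simp at hle2
  omega
end

section
/- Let X ⊆ P² be a k-configuration of type (1,2,…,s) with s ≥ 2, defined using subsets X₁,…,X_s and lines L₁,…,L_s, where X₁ = {P} is the point on L₁ and X₂ = {Q₁,Q₂} are the two points on L₂. If L is a line in P² with |L ∩ X| = s and L ∉ {L₁,…,L_s}, then L is either the line through P and Q₁ or the line through P and Q₂. -/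
theorem line_eq_of_two_points {K : Type} [Field K] (L M : ProjLine K) (p q : P2 K) (hpq : p ≠ q)
    (hpL : p ∈ L.points) (hqL : q ∈ L.points) (hpM : p ∈ M.points) (hqM : q ∈ M.points) :
    L = M := by
  have key : ∀ r : P2 K, r ∈ L.points → r ∈ M.points →
      Module.finrank K ↥(L.toSubmodule ⊓ M.toSubmodule) ≤ 1 →
      r.submodule = L.toSubmodule ⊓ M.toSubmodule := by
    intro r h1 h2 h3
    apply Submodule.eq_of_le_of_finrank_le (le_inf h1 h2)
    rw [Projectivization.finrank_submodule]
    exact h3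
  by_cases h : Module.finrank K ↥(L.toSubmodule ⊓ M.toSubmodule) ≤ 1
  · exact absurd (Projectivization.submodule_injective
      ((key p hpL hpM h).trans (key q hqL hqM h).symm)) hpq
  · have h1 : L.toSubmodule ⊓ M.toSubmodule = L.toSubmodule := by
      apply Submodule.eq_of_le_of_finrank_le inf_le_left
      rw [L.finrank_eq_two]; omega
    have h2 : L.toSubmodule ⊓ M.toSubmodule = M.toSubmodule := by
      apply Submodule.eq_of_le_of_finrank_le inf_le_right
      rw [M.finrank_eq_two]; omega
    have h3 := h1.symm.trans h2
    cases L; cases M; simp_all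

/-- **Lemma (extra line).** Let `X` be a k-configuration of type `(1,2,…,s)`,
`s ≥ 2`, with `X₁ = {P}` and `X₂ = {Q₁,Q₂}`. If a line `L` not among the
defining lines contains exactly `s` points of `X`, then `L` is the line through
`P` and `Q₁` or the line through `P` and `Q₂`. -/
theorem kconfig_extra_line {K : Type} [Field K] [IsAlgClosed K] {s : ℕ} (hs : 2 ≤ s)
    (X : Set (P2 K)) (Xs : Fin s → Set (P2 K)) (Ls : Fin s → ProjLine K)
    (hX : IsKConfig X (fun i : Fin s => i.1 + 1) Xs Ls)
    (P Q₁ Q₂ : P2 K)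
    (hX1 : Xs ⟨0, by omega⟩ = {P}) (hX2 : Xs ⟨1, by omega⟩ = {Q₁, Q₂}) (hQ : Q₁ ≠ Q₂)
    (L : ProjLine K) (hL : (X ∩ L.points).ncard = s) (hLnot : ∀ i : Fin s, L ≠ Ls i) :
    (P ∈ L.points ∧ Q₁ ∈ L.points) ∨ (P ∈ L.points ∧ Q₂ ∈ L.points) := by
  have hex : ∀ x : ↥(X ∩ L.points), ∃ i, x.1 ∈ Xs i := by
    rintro ⟨x, hx, -⟩
    rw [hX.union_eq] at hx
    exact Set.mem_iUnion.1 hx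
  choose f hf using hex
  have hinj : Function.Injective f := by
    intro x y hxy
    by_contra hne
    refine hLnot (f x) (line_eq_of_two_points L _ x.1 y.1 (fun h => hne (Subtype.ext h)) x.2.2 y.2.2
      (hX.subset_line _ (hf x)) (hX.subset_line _ ?_))
    rw [hxy]; exact hf y
  have hfin : Finite ↥(X ∩ L.points) := Finite.of_injective f hinj
  have hbij : Function.Bijective f := by
    rw [Nat.bijective_iff_injective_and_card]
    refine ⟨hinj, ?_⟩
    rw [Nat.card_coe_set_eq, hL, Nat.card_fin]
  obtain ⟨x, hx⟩ := hbij.2 ⟨0, by omega⟩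
  obtain ⟨y, hy⟩ := hbij.2 ⟨1, by omega⟩
  have h1 := hf x
  have h2 := hf y
  rw [hx, hX1] at h1
  rw [hy, hX2] at h2
  have hP : P ∈ L.points := by
    rw [← Set.mem_singleton_iff.1 h1]; exact x.2.2
  rcases h2 with h2 | h2
  · left; exact ⟨hP, h2 ▸ y.2.2⟩
  · right; exact ⟨hP, (Set.mem_singleton_iff.1 h2) ▸ y.2.2⟩
end

section
/- Let X ⊆ P² be a k-configuration of type (1,2,…,s) with s ≥ 2. Then there are at most s + 1 lines L in P² with |L ∩ X| = s. -/
theorem ProjLine.ext_sub {K : Type} [Field K] {L M : ProjLine K}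
    (h : L.toSubmodule = M.toSubmodule) : L = M := by
  cases L; cases M; simp_all

theorem ProjLine.inter_unique {K : Type} [Field K] {L M : ProjLine K} (h : L ≠ M)
    {p q : P2 K} (hp : p ∈ L.points) (hp' : p ∈ M.points)
    (hq : q ∈ L.points) (hq' : q ∈ M.points) : p = q := by
  have hlt : Module.finrank K ↥(L.toSubmodule ⊓ M.toSubmodule) < 2 := by
    by_contra hge
    push Not at hge
    apply h
    apply ProjLine.ext_sub
    have h1 : L.toSubmodule ⊓ M.toSubmodule = L.toSubmodule :=
      Submodule.eq_of_le_of_finrank_le inf_le_left (by rw [L.finrank_eq_two]; exact hge)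
    have h2 : L.toSubmodule ⊓ M.toSubmodule = M.toSubmodule :=
      Submodule.eq_of_le_of_finrank_le inf_le_right (by rw [M.finrank_eq_two]; exact hge)
    rw [← h1, h2]
  have key : ∀ r : P2 K, r ∈ L.points → r ∈ M.points →
      r.submodule = L.toSubmodule ⊓ M.toSubmodule := by
    intro r h1 h2
    apply Submodule.eq_of_le_of_finrank_le (le_inf h1 h2)
    rw [Projectivization.finrank_submodule]
    omega
  apply Projectivization.submodule_injective
  rw [key p hp hp', key q hq hq']

open Classical in
theorem counting {P Λ : Type} (X : Finset P) (T : Finset Λ) (I : Λ → P → Prop) (s : ℕ)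
    (hs : 2 ≤ s) (hX : 2 * X.card ≤ s * (s + 1)) (hT : T.card = s + 2)
    (hc : ∀ L ∈ T, (X.filter (I L)).card = s)
    (hu : ∀ L ∈ T, ∀ M ∈ T, L ≠ M → (X.filter (fun p => I L p ∧ I M p)).card ≤ 1) : False := by
  let f : Λ → P → ℤ := fun L p => if I L p then 1 else 0
  have hff : ∀ L M p, f L p * f M p = if I L p ∧ I M p then 1 else 0 := by
    intro L M p
    simp only [f]
    split_ifs <;> simp_all
  have h1 : ∀ p ∈ X, 0 ≤ (∑ L ∈ T, f L p) ^ 2 - 5 * (∑ L ∈ T, f L p) + 6 := by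
    intro p _
    generalize (∑ L ∈ T, f L p) = m
    rcases le_or_gt m 2 with h | h
    · nlinarith
    · have : 3 ≤ m := h
      nlinarith
  have h2 := Finset.sum_nonneg h1
  rw [Finset.sum_add_distrib, Finset.sum_sub_distrib, ← Finset.mul_sum] at h2
  have h3 : ∑ p ∈ X, ∑ L ∈ T, f L p = (s + 2) * s := by
    rw [Finset.sum_comm]
    have : ∀ L ∈ T, ∑ p ∈ X, f L p = (s : ℤ) := by
      intro L hL
      simp only [f, Finset.sum_boole, hc L hL]
    rw [Finset.sum_congr rfl this]
    simp [hT]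
  have h4 : ∑ p ∈ X, (∑ L ∈ T, f L p) ^ 2 ≤ (s + 2) * (s + (s + 1)) := by
    have e : ∑ p ∈ X, (∑ L ∈ T, f L p) ^ 2
        = ∑ L ∈ T, ∑ M ∈ T, ∑ p ∈ X, f L p * f M p := by
      simp_rw [sq, Finset.sum_mul_sum]
      rw [Finset.sum_comm]
      refine Finset.sum_congr rfl fun L _ => ?_
      rw [Finset.sum_comm]
    rw [e]
    have : ∀ L ∈ T, ∑ M ∈ T, ∑ p ∈ X, f L p * f M p ≤ (s : ℤ) + (s + 1) := by
      intro L hL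
      rw [← Finset.add_sum_erase T _ hL]
      apply add_le_add
      · simp only [hff, and_self, Finset.sum_boole, hc L hL, le_refl]
      · refine (Finset.sum_le_card_nsmul _ _ (1 : ℤ) ?_).trans ?_
        · intro M hM
          rw [Finset.mem_erase] at hM
          simp only [hff, Finset.sum_boole]
          exact_mod_cast hu L hL M hM.2 (Ne.symm hM.1)
        · rw [Finset.card_erase_of_mem hL, hT]
          simp
    refine (Finset.sum_le_card_nsmul _ _ _ this).trans ?_
    simp [hT]
  rw [h3] at h2
  simp only [Finset.sum_const, nsmul_eq_mul] at h2
  have h5 : 2 * (X.card : ℤ) ≤ s * (s + 1) := by exact_mod_cast hX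
  have h6 : (2 : ℤ) ≤ s := by exact_mod_cast hs
  nlinarith

/-- **Corollary (number of lines).** Let `X` be a k-configuration of type
`(1,2,…,s)`, `s ≥ 2`. Then there are at most `s + 1` lines containing exactly
`s` points of `X`. -/
theorem kconfig_at_most_lines {K : Type} [Field K] [IsAlgClosed K] {s : ℕ} (hs : 2 ≤ s)
    (X : Set (P2 K)) (Xs : Fin s → Set (P2 K)) (Ls : Fin s → ProjLine K)
    (hX : IsKConfig X (fun i : Fin s => i.1 + 1) Xs Ls) :
    {L : ProjLine K | (X ∩ L.points).ncard = s}.Finite ∧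
      {L : ProjLine K | (X ∩ L.points).ncard = s}.ncard ≤ s + 1 := by
  classical
  have hfin : ∀ i, (Xs i).Finite := fun i =>
    Set.finite_of_ncard_ne_zero (by rw [hX.card_eq i]; simp)
  have hXfin : X.Finite := by rw [hX.union_eq]; exact Set.finite_iUnion hfin
  have hcard : 2 * hXfin.toFinset.card ≤ s * (s + 1) := by
    have e : hXfin.toFinset = Finset.univ.biUnion (fun i => (hfin i).toFinset) := by
      ext p; simp [hX.union_eq]
    have h1 : hXfin.toFinset.card ≤ ∑ i : Fin s, (i.1 + 1) := by
      rw [e]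
      refine Finset.card_biUnion_le.trans (Finset.sum_le_sum fun i _ => ?_)
      rw [← Set.ncard_eq_toFinset_card _ (hfin i), hX.card_eq i]
    rw [Fin.sum_univ_eq_sum_range (fun i => i + 1) s] at h1
    have h2 : ∀ n : ℕ, 2 * ∑ i ∈ Finset.range n, (i + 1) = n * (n + 1) := by
      intro n
      induction n with
      | zero => simp
      | succ n ih => rw [Finset.sum_range_succ, mul_add, ih]; ring
    have := h2 s
    omega
  have key : ∀ T : Finset (ProjLine K),
      (T : Set (ProjLine K)) ⊆ {L : ProjLine K | (X ∩ L.points).ncard = s} →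
      T.card ≠ s + 2 := by
    intro T hT hTc
    refine counting hXfin.toFinset T (fun L p => p ∈ L.points) s hs hcard hTc ?_ ?_
    · intro L hL
      have h := hT hL
      simp only [Set.mem_setOf_eq] at h
      rw [← h, ← Set.ncard_coe_finset]
      congr 1
      ext p; simp
    · intro L _ M _ hne
      rw [Finset.card_le_one]
      intro p hp q hq
      simp only [Finset.mem_filter] at hp hq
      exact ProjLine.inter_unique hne hp.2.1 hp.2.2 hq.2.1 hq.2.2
  have hF : {L : ProjLine K | (X ∩ L.points).ncard = s}.Finite := by
    by_contra hinf
    obtain ⟨T, hT, hc⟩ := Set.Infinite.exists_subset_card_eq hinf (s + 2)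
    exact key T hT hc
  refine ⟨hF, ?_⟩
  by_contra hgt
  rw [Set.ncard_eq_toFinset_card _ hF] at hgt
  obtain ⟨T, hT, hc⟩ := Finset.exists_subset_card_eq (n := s + 2) (s := hF.toFinset) (by omega)
  refine key T ?_ hc
  intro L hL
  have := hT hL
  simpa using this
end
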